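/- Let u : B_1^+ ∪ B_1^0 → ℝ be continuous, a-harmonic in B_1^+, and satisfy ∫_{B_1^+} y^a u(x,y)² dx dy < ∞, and suppose that f(x) := u(x,0) is C^{1,1} on B_1^0. Then there exist a function g : B_{1/2}^0 → ℝ which is differentiable with a-Hölder continuous derivative, and a constant C depending only on n and a, such that for all (x,y) ∈ B_{1/2}^+: |u(x,y) − f(x) − y^{1−a} g(x)| ≤ C y² ( ‖f‖_{C^{1,1}(B_1^0)} + (∫_{B_1^+} y^a u²)^{1/2} ). -/

import Mathlib

open Set Filter Topology MeasureTheory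
open scoped RealInnerProductSpace

noncomputable section

abbrev En (n : ℕ) := EuclideanSpace ℝ (Fin n)

/-- The open upper half ball `B_r^+`. -/
def halfBall (n : ℕ) (r : ℝ) : Set (En n × ℝ) :=
  {p | ‖p.1‖ ^ 2 + p.2 ^ 2 < r ^ 2 ∧ 0 < p.2}

/-- The closure of the upper half ball. -/
def closedHalfBall (n : ℕ) (r : ℝ) : Set (En n × ℝ) :=
  {p | ‖p.1‖ ^ 2 + p.2 ^ 2 ≤ r ^ 2 ∧ 0 ≤ p.2}

/-- `B_r^+ ∪ B_r^0`. -/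
def halfBallWithBase (n : ℕ) (r : ℝ) : Set (En n × ℝ) :=
  {p | ‖p.1‖ ^ 2 + p.2 ^ 2 < r ^ 2 ∧ 0 ≤ p.2}

/-- The flat ball `B_r^0` in `ℝⁿ`. -/
def flatBall (n : ℕ) (r : ℝ) : Set (En n) := {x | ‖x‖ < r}

/-- `(∂B_1)^+`. -/
def spherePlus (n : ℕ) : Set (En n × ℝ) := {p | ‖p.1‖ ^ 2 + p.2 ^ 2 = 1 ∧ 0 < p.2}

/-- closure of `(∂B_1)^+`. -/
def closedSpherePlus (n : ℕ) : Set (En n × ℝ) := {p | ‖p.1‖ ^ 2 + p.2 ^ 2 = 1 ∧ 0 ≤ p.2}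

/-- Second directional derivative of `u` at `p` in direction `v`. -/
def D2 {n : ℕ} (u : En n × ℝ → ℝ) (p v : En n × ℝ) : ℝ :=
  fderiv ℝ (fun q => fderiv ℝ u q v) p v

/-- The Laplacian in the `n+1` variables `(x, y)`. -/
def lap {n : ℕ} (u : En n × ℝ → ℝ) (p : En n × ℝ) : ℝ :=
  (∑ i : Fin n, D2 u p (EuclideanSpace.single i 1, 0)) + D2 u p (0, 1)

/-- `u` is `a`-harmonic on `Ω`: it is `C²` there and `Δu + (a/y) ∂_y u = 0`. -/
def IsAHarmonicOn {n : ℕ} (a : ℝ) (u : En n × ℝ → ℝ) (Ω : Set (En n × ℝ)) : Prop :=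
  ContDiffOn ℝ 2 u Ω ∧ ∀ p ∈ Ω, lap u p + (a / p.2) * fderiv ℝ u p (0, 1) = 0

/-- `lim_{y → 0⁺} y^a ∂_y w(x, y) = L`. -/
def NormalDerivLimit {n : ℕ} (a : ℝ) (w : En n × ℝ → ℝ) (x : En n) (L : ℝ) : Prop :=
  Tendsto (fun y : ℝ => y ^ a * fderiv ℝ w (x, y) (0, 1)) (𝓝[>] (0 : ℝ)) (𝓝 L)

/-- The boundary-restriction `(t, x) ↦ u(t, x, 0)`. -/
def bdryFun {n : ℕ} (u : ℝ → En n × ℝ → ℝ) : ℝ × En n → ℝ := fun q => u q.1 (q.2, 0)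

/-- A classical solution of the extended drift–diffusion equation on
`[-1,0] × closure (B_1^+)` with drift `b` and right-hand side `f`. -/
def IsExtDDSolution {n : ℕ} (a : ℝ) (b : ℝ → En n → En n) (f : ℝ → En n → ℝ)
    (u : ℝ → En n × ℝ → ℝ) : Prop :=
  ContinuousOn (fun q : ℝ × (En n × ℝ) => u q.1 q.2) (Icc (-1 : ℝ) 0 ×ˢ closedHalfBall n 1) ∧
  (∀ t ∈ Icc (-1 : ℝ) 0, IsAHarmonicOn a (u t) (halfBall n 1)) ∧
  (∀ q ∈ Ioc (-1 : ℝ) 0 ×ˢ flatBall n 1,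
      DifferentiableWithinAt ℝ (bdryFun u) (Ioc (-1 : ℝ) 0 ×ˢ flatBall n 1) q) ∧
  (∀ t x, (t, x) ∈ Ioc (-1 : ℝ) 0 ×ˢ flatBall n 1 →
      ∃ L : ℝ, NormalDerivLimit a (u t) x L ∧
        fderivWithin ℝ (bdryFun u) (Ioc (-1 : ℝ) 0 ×ˢ flatBall n 1) (t, x) (1, 0) +
          fderivWithin ℝ (bdryFun u) (Ioc (-1 : ℝ) 0 ×ˢ flatBall n 1) (t, x) (0, b t x) -
          L = f t x)

/-- A classical solution of the localized fractional heat equation on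
`[-1,0] × closure (B_1^+)`. -/
def IsFracHeatSolution {n : ℕ} (a : ℝ) (u : ℝ → En n × ℝ → ℝ) : Prop :=
  ContinuousOn (fun q : ℝ × (En n × ℝ) => u q.1 q.2) (Icc (-1 : ℝ) 0 ×ˢ closedHalfBall n 1) ∧
  (∀ t ∈ Icc (-1 : ℝ) 0, IsAHarmonicOn a (u t) (halfBall n 1)) ∧
  (∀ t ∈ Ioc (-1 : ℝ) 0, ∀ x ∈ flatBall n 1,
      DifferentiableWithinAt ℝ (fun τ => u τ (x, 0)) (Ioc (-1 : ℝ) 0) t ∧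
      NormalDerivLimit a (u t) x (derivWithin (fun τ => u τ (x, 0)) (Ioc (-1 : ℝ) 0) t))

/-!
The part of `u` that is odd under reflection in `{x_j = X_j}` vanishes on that hyperplane, so a
quadratic barrier and the maximum principle bound the symmetric differences of `u` up to the flat
boundary. Symmetric differences of `u` are again `a`-harmonic; applying the same bound to them
controls the second tangential derivatives of `u`. On each vertical line this leaves the ordinary
differential equation `v'' + (a / y) v' = O(1)`: the flux `y ^ a v'` has a limit at `y = 0`, and
integrating it gives `u = f + y ^ (1 - a) g + O(y ^ 2)`, with a constant governed by the `C^{1,1}`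
size of `f` and `sup |u|`.

The supremum is in turn controlled by the weighted `L²` norm: near a maximum of
`(R - ‖p‖) ^ (n + 2) |u|` the same estimates keep `|u|` comparable to its maximum on a box of
proportional size, so that a large maximum forces a large mass.

Finally `g` is the limit of `φ y = y ^ (a - 1) (u(·, y) - f)` at rate `y ^ (1 + a)`, while the
derivatives of `φ y` have Lipschitz constant `O(y ^ (a - 1))`. Interpolating between the two along
`y = 2 ^ (-k)` makes the derivatives converge, to an `a`-Hölder limit.
-/

section Lines

variable {V : Type*} [NormedAddCommGroup V] [NormedSpace ℝ V] {u : V → ℝ} {p : V}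

theorem fderiv_eq_deriv_line (hu : DifferentiableAt ℝ u p) (v : V) :
    fderiv ℝ u p v = deriv (fun t : ℝ ↦ u (p + t • v)) 0 :=
  hu.lineDeriv_eq_fderiv.symm

theorem hasFDerivAt_fderiv_apply (hu : ContDiffAt ℝ 2 u p) (v : V) :
    HasFDerivAt (fun q ↦ fderiv ℝ u q v) (fderiv ℝ (fun q ↦ fderiv ℝ u q v) p) p :=
  (((hu.fderiv_right (m := 1) (by norm_num)).differentiableAt one_ne_zero).clm_apply
    (differentiableAt_const v)).hasFDerivAt

theorem hasDerivAt_line (p v : V) (t : ℝ) :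
    HasDerivAt (fun t : ℝ ↦ p + t • v) v t := by
  simpa only [id_eq, one_smul] using ((hasDerivAt_id t).smul_const v).const_add p

theorem contDiffAt_line (hu : ContDiffAt ℝ 2 u p) (v : V) :
    ContDiffAt ℝ 2 (fun t : ℝ ↦ u (p + t • v)) 0 :=
  ContDiffAt.comp (f := fun t : ℝ ↦ p + t • v) 0 (by simpa using hu) (by fun_prop)

end Lines

section Operator

variable {n : ℕ} {a : ℝ} {u w : En n × ℝ → ℝ} {p : En n × ℝ}

/-- The unit vector of `ℝⁿ × ℝ` along the `i`-th tangential coordinate. -/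
def baseVec (i : Fin n) : En n × ℝ := (EuclideanSpace.single i 1, 0)

/-- The operator `Δ + (a / y) ∂_y`, whose null functions are the `a`-harmonic ones. -/
def aLap (a : ℝ) (u : En n × ℝ → ℝ) (p : En n × ℝ) : ℝ :=
  lap u p + (a / p.2) * fderiv ℝ u p (0, 1)

/-- Pointwise `a`-harmonicity, with `C²` regularity in a neighbourhood of the point. -/
def IsAHarmonicAt (a : ℝ) (u : En n × ℝ → ℝ) (p : En n × ℝ) : Prop :=
  ContDiffAt ℝ 2 u p ∧ aLap a u p = 0

theorem IsAHarmonicOn.isAHarmonicAt {Ω : Set (En n × ℝ)} (hu : IsAHarmonicOn a u Ω)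
    (hΩ : IsOpen Ω) (hp : p ∈ Ω) : IsAHarmonicAt a u p :=
  ⟨hu.1.contDiffAt (hΩ.mem_nhds hp), hu.2 p hp⟩

theorem D2_eq_iteratedDeriv_line (hu : ContDiffAt ℝ 2 u p) (v : En n × ℝ) :
    D2 u p v = iteratedDeriv 2 (fun t : ℝ ↦ u (p + t • v)) 0 := by
  have hline (t : ℝ) := hasDerivAt_line p v t
  have hzero : p + (0 : ℝ) • v = p := by simp
  have hdiff : ∀ᶠ q in 𝓝 (p + (0 : ℝ) • v), DifferentiableAt ℝ u q := by
    filter_upwards [hzero.symm ▸ hu.eventually (by simp)] with q hq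
    exact hq.differentiableAt two_ne_zero
  have hfirst : deriv (fun t : ℝ ↦ u (p + t • v)) =ᶠ[𝓝 0] fun t ↦ fderiv ℝ u (p + t • v) v := by
    filter_upwards [(hline 0).continuousAt.eventually hdiff] with t ht
    exact (ht.hasFDerivAt.comp_hasDerivAt t (hline t)).deriv
  have hsecond : HasDerivAt (fun t : ℝ ↦ fderiv ℝ u (p + t • v) v) (D2 u p v) 0 :=
    (hasFDerivAt_fderiv_apply hu v).comp_hasDerivAt_of_eq 0 (hline 0) hzero.symm
  rw [iteratedDeriv_succ, iteratedDeriv_one, hfirst.deriv_eq]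
  exact hsecond.deriv.symm

theorem D2_sub (hu : ContDiffAt ℝ 2 u p) (hw : ContDiffAt ℝ 2 w p) (v : En n × ℝ) :
    D2 (fun q ↦ u q - w q) p v = D2 u p v - D2 w p v := by
  rw [D2_eq_iteratedDeriv_line (hu.sub hw), D2_eq_iteratedDeriv_line hu,
    D2_eq_iteratedDeriv_line hw]
  exact iteratedDeriv_fun_sub (contDiffAt_line hu v) (contDiffAt_line hw v)

theorem aLap_sub (hu : ContDiffAt ℝ 2 u p) (hw : ContDiffAt ℝ 2 w p) :
    aLap a (fun q ↦ u q - w q) p = aLap a u p - aLap a w p := by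
  simp only [aLap, lap, D2_sub hu hw, Finset.sum_sub_distrib, sub_apply,
    fderiv_fun_sub (hu.differentiableAt two_ne_zero) (hw.differentiableAt two_ne_zero)]
  ring

theorem IsAHarmonicAt.sub (hu : IsAHarmonicAt a u p) (hw : IsAHarmonicAt a w p) :
    IsAHarmonicAt a (fun q ↦ u q - w q) p :=
  ⟨hu.1.sub hw.1, by rw [aLap_sub hu.1 hw.1, hu.2, hw.2, sub_zero]⟩

theorem IsAHarmonicAt.neg (hu : IsAHarmonicAt a u p) : IsAHarmonicAt a (fun q ↦ -u q) p := by
  simpa only [sub_self, zero_sub] using (hu.sub hu).sub hu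

theorem iteratedDeriv_two_nonpos_of_isLocalMax {φ : ℝ → ℝ} {t : ℝ} (h : IsLocalMax φ t)
    (hc : ContinuousAt φ t) : iteratedDeriv 2 φ t ≤ 0 := by
  rw [iteratedDeriv_succ, iteratedDeriv_one]
  by_contra! hpos
  have hmin := isLocalMin_of_deriv_deriv_pos hpos h.deriv_eq_zero hc
  have hconst : φ =ᶠ[𝓝 t] fun _ ↦ φ t := by
    filter_upwards [h, hmin] with x hx hy using le_antisymm hx hy
  have hzero : deriv (deriv φ) t = 0 := by simpa using hconst.deriv.deriv_eq
  exact hpos.ne' hzero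

theorem D2_nonpos_of_isLocalMax (hu : ContDiffAt ℝ 2 u p) (h : IsLocalMax u p) (v : En n × ℝ) :
    D2 u p v ≤ 0 := by
  rw [D2_eq_iteratedDeriv_line hu]
  refine iteratedDeriv_two_nonpos_of_isLocalMax ?_ (contDiffAt_line hu v).continuousAt
  exact IsLocalMax.comp_continuous (g := fun t : ℝ ↦ p + t • v) (by simpa using h)
    (hasDerivAt_line p v 0).continuousAt

theorem aLap_nonpos_of_isLocalMax (hu : ContDiffAt ℝ 2 u p) (h : IsLocalMax u p) :
    aLap a u p ≤ 0 := by
  have hD2 := D2_nonpos_of_isLocalMax hu h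
  rw [aLap, lap, h.fderiv_eq_zero, zero_apply, mul_zero, add_zero]
  exact add_nonpos (Finset.sum_nonpos fun i _ ↦ hD2 _) (hD2 _)

theorem nonpos_of_aLap_pos {K O : Set (En n × ℝ)} (hK : IsCompact K) (hO : IsOpen O)
    (hOK : O ⊆ K) (hc : ContinuousOn u K) (hC : ∀ q ∈ O, ContDiffAt ℝ 2 u q)
    (hL : ∀ q ∈ O, 0 < aLap a u q) (hb : ∀ q ∈ K \ O, u q ≤ 0) (hp : p ∈ K) : u p ≤ 0 := by
  obtain ⟨q, hq, hmax⟩ := hK.exists_isMaxOn ⟨p, hp⟩ hc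
  have hqO : q ∉ O := fun hqO ↦ (hL q hqO).not_ge <| aLap_nonpos_of_isLocalMax (hC q hqO) <|
    hmax.isLocalMax (mem_of_superset (hO.mem_nhds hqO) hOK)
  exact (hmax hp).trans (hb q ⟨hq, hqO⟩)

end Operator

section AffineChange

variable {n : ℕ} {a : ℝ} {u : En n × ℝ → ℝ} {p : En n × ℝ}

theorem IsAHarmonicAt.comp_affine (T : En n × ℝ →L[ℝ] En n × ℝ) (c : En n × ℝ)
    (hu : IsAHarmonicAt a u (T p + c)) (hsnd : (T p + c).2 = p.2)
    (hbase : ∀ i, T (baseVec i) = baseVec i ∨ T (baseVec i) = -baseVec i)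
    (hvert : T (0, 1) = (0, 1)) : IsAHarmonicAt a (fun q ↦ u (T q + c)) p := by
  obtain ⟨hC, hlap⟩ := hu
  have hC' : ContDiffAt ℝ 2 (fun q ↦ u (T q + c)) p :=
    hC.comp (f := fun q ↦ T q + c) p (by fun_prop)
  have hline (v : En n × ℝ) (t : ℝ) : T (p + t • v) + c = T p + c + t • T v := by
    rw [map_add, map_smul]; abel
  have hD2 (v : En n × ℝ) : D2 (fun q ↦ u (T q + c)) p v = D2 u (T p + c) (T v) := by
    rw [D2_eq_iteratedDeriv_line hC', D2_eq_iteratedDeriv_line hC]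
    simp only [hline]
  have hD2base (i : Fin n) : D2 u (T p + c) (T (baseVec i)) = D2 u (T p + c) (baseVec i) := by
    rcases hbase i with h | h <;> rw [h]
    simp only [D2, map_neg, fderiv_fun_neg, neg_apply, neg_neg]
  refine ⟨hC', ?_⟩
  rw [← hlap, aLap, aLap, lap, lap, hD2, hvert, hsnd,
    fderiv_eq_deriv_line (hC'.differentiableAt two_ne_zero),
    fderiv_eq_deriv_line (hC.differentiableAt two_ne_zero)]
  simp only [hline, hvert]
  exact congrArg (· + _ + _) (Finset.sum_congr rfl fun i _ ↦ (hD2 _).trans (hD2base i))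

theorem IsAHarmonicAt.comp_add_baseVec {i : Fin n} {t : ℝ}
    (hu : IsAHarmonicAt a u (p + t • baseVec i)) :
    IsAHarmonicAt a (fun q ↦ u (q + t • baseVec i)) p :=
  hu.comp_affine (.id ℝ _) _ (by simp [baseVec]) (fun _ ↦ .inl rfl) rfl

/-- Reflection of `ℝⁿ × ℝ` in the hyperplane `{x_j = c}`. -/
def reflectAt (j : Fin n) (c : ℝ) (p : En n × ℝ) : En n × ℝ :=
  p - (2 * (p.1 j - c)) • baseVec j

theorem reflectAt_snd (j : Fin n) (c : ℝ) (p : En n × ℝ) : (reflectAt j c p).2 = p.2 := by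
  simp [reflectAt, baseVec]

theorem continuous_reflectAt (j : Fin n) (c : ℝ) : Continuous (reflectAt (n := n) j c) := by
  unfold reflectAt
  fun_prop

theorem dist_reflectAt (j : Fin n) (X p : En n × ℝ) :
    dist (reflectAt j (X.1 j) p) X = dist p X := by
  have hcoord (i : Fin n) :
      ((reflectAt j (X.1 j) p - X).1 i) ^ 2 = ((p - X).1 i) ^ 2 := by
    by_cases hi : i = j
    · subst hi
      simp only [reflectAt, baseVec, Prod.smul_mk, smul_eq_mul, mul_zero, Prod.fst_sub,
        PiLp.sub_apply, PiLp.smul_apply, PiLp.single_eq_same, mul_one]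
      ring
    · simp [reflectAt, baseVec, hi]
  have hfst : ‖(reflectAt j (X.1 j) p - X).1‖ = ‖(p - X).1‖ := by
    rw [← sq_eq_sq₀ (norm_nonneg _) (norm_nonneg _), EuclideanSpace.real_norm_sq_eq,
      EuclideanSpace.real_norm_sq_eq]
    exact Finset.sum_congr rfl fun i _ ↦ hcoord i
  rw [dist_eq_norm, dist_eq_norm, Prod.norm_def, Prod.norm_def, hfst, Prod.snd_sub,
    reflectAt_snd, Prod.snd_sub]

theorem IsAHarmonicAt.comp_reflectAt {j : Fin n} {c : ℝ}
    (hu : IsAHarmonicAt a u (reflectAt j c p)) :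
    IsAHarmonicAt a (fun q ↦ u (reflectAt j c q)) p := by
  let x : En n × ℝ →L[ℝ] ℝ := (EuclideanSpace.proj j).comp (.fst ℝ (En n) ℝ)
  let T : En n × ℝ →L[ℝ] En n × ℝ := .id ℝ _ - (2 : ℝ) • x.smulRight (baseVec j)
  have hT (q : En n × ℝ) : T q + (2 * c) • baseVec j = reflectAt j c q := by
    have hTq : T q = q - (2 : ℝ) • q.1 j • baseVec j := rfl
    rw [hTq, reflectAt]
    module
  simp only [← hT] at hu ⊢
  refine hu.comp_affine T _ (by rw [hT, reflectAt_snd]) (fun i ↦ ?_) (by simp [T, x])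
  have hTi : T (baseVec i) = baseVec i - (2 : ℝ) • (if j = i then (1 : ℝ) else 0) • baseVec j := by
    simp [T, x, baseVec]
  rw [hTi]
  split_ifs with h
  · subst h
    exact .inr (by module)
  · exact .inl (by module)

end AffineChange

section HalfCylinder

/-- The part of the open product ball `B_ρ(X)` lying in the upper half space. -/
def halfCyl {n : ℕ} (X : En n × ℝ) (ρ : ℝ) : Set (En n × ℝ) := Metric.ball X ρ ∩ {p | 0 < p.2}

/-- The part of the closed product ball of radius `ρ` around `X` lying in the closed upper half
space. -/
def closedHalfCyl {n : ℕ} (X : En n × ℝ) (ρ : ℝ) : Set (En n × ℝ) :=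
  Metric.closedBall X ρ ∩ {p | 0 ≤ p.2}

/-- The symmetric difference of `u` at `p` with step `h` along `v`. -/
def centralDiff {V : Type*} [AddCommGroup V] [Module ℝ V] (v : V) (h : ℝ) (u : V → ℝ) (p : V) :
    ℝ :=
  u (p + h • v) - u (p - h • v)

/-- On the half cylinder of radius `ρ` around `X`, `u` is an `a`-harmonic function, continuous up
to the flat boundary, where its trace is `C^{1,1}` with derivative `f'`; the derivative is bounded
by `M₁` and has Lipschitz constant `M₂`. -/
structure IsC11Extension {n : ℕ} (a : ℝ) (u : En n × ℝ → ℝ) (f' : En n → En n →L[ℝ] ℝ)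
    (X : En n × ℝ) (ρ M₁ M₂ : ℝ) : Prop where
  continuousOn : ContinuousOn u (closedHalfCyl X ρ)
  harmonic : ∀ p ∈ halfCyl X ρ, IsAHarmonicAt a u p
  hasFDerivAt : ∀ x ∈ Metric.closedBall X.1 ρ, HasFDerivAt (fun z ↦ u (z, 0)) (f' x) x
  norm_le : ∀ x ∈ Metric.closedBall X.1 ρ, ‖f' x‖ ≤ M₁
  lipschitz : ∀ x ∈ Metric.closedBall X.1 ρ, ∀ x' ∈ Metric.closedBall X.1 ρ,
    ‖f' x - f' x'‖ ≤ M₂ * ‖x - x'‖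
  lipschitz_nonneg : 0 ≤ M₂

variable {n : ℕ} {a : ℝ} {u : En n × ℝ → ℝ} {f' : En n → En n →L[ℝ] ℝ} {X p : En n × ℝ}
  {ρ M₁ M₂ h k : ℝ} {j : Fin n}

theorem isOpen_halfCyl : IsOpen (halfCyl X ρ) :=
  Metric.isOpen_ball.inter (isOpen_lt continuous_const continuous_snd)

theorem isCompact_closedHalfCyl : IsCompact (closedHalfCyl X ρ) :=
  (isCompact_closedBall X ρ).inter_right (isClosed_le continuous_const continuous_snd)

theorem halfCyl_subset_closedHalfCyl : halfCyl X ρ ⊆ closedHalfCyl X ρ :=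
  inter_subset_inter Metric.ball_subset_closedBall fun p (hp : 0 < p.2) ↦ hp.le

theorem norm_smul_single (h : ℝ) (j : Fin n) :
    ‖h • EuclideanSpace.single j (1 : ℝ)‖ = |h| := by
  rw [norm_smul, PiLp.norm_single, norm_one, mul_one, Real.norm_eq_abs]

theorem norm_smul_baseVec (h : ℝ) (j : Fin n) : ‖h • baseVec j‖ = |h| := by
  rw [baseVec, Prod.smul_mk, smul_zero, Prod.norm_mk, norm_smul_single, norm_zero,
    max_eq_left (abs_nonneg h)]

theorem add_smul_baseVec_mem_closedHalfCyl (hp : p ∈ closedHalfCyl X (ρ - |h|)) (j : Fin n) :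
    p + h • baseVec j ∈ closedHalfCyl X ρ := by
  refine ⟨?_, by simpa [baseVec] using hp.2⟩
  have hdist : dist (p + h • baseVec j) p = |h| := by
    rw [dist_eq_norm, add_sub_cancel_left, norm_smul_baseVec]
  have hpX : dist p X ≤ ρ - |h| := hp.1
  exact (dist_triangle _ p X).trans (by linarith)

theorem add_smul_baseVec_mem_halfCyl (hp : p ∈ halfCyl X (ρ - |h|)) (j : Fin n) :
    p + h • baseVec j ∈ halfCyl X ρ := by
  refine ⟨?_, by simpa [baseVec] using hp.2⟩
  have hdist : dist (p + h • baseVec j) p = |h| := by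
    rw [dist_eq_norm, add_sub_cancel_left, norm_smul_baseVec]
  have hpX : dist p X < ρ - |h| := hp.1
  exact (dist_triangle _ p X).trans_lt (by linarith)

theorem add_smul_single_mem_closedBall {x y : En n} (hx : x ∈ Metric.closedBall y (ρ - |h|))
    (j : Fin n) : x + h • EuclideanSpace.single j 1 ∈ Metric.closedBall y ρ := by
  have hdist : dist (x + h • EuclideanSpace.single j (1 : ℝ)) x = |h| := by
    rw [dist_eq_norm, add_sub_cancel_left, norm_smul_single]
  have hxy : dist x y ≤ ρ - |h| := hx
  exact (dist_triangle _ x y).trans (by linarith)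

theorem centralDiff_eq_sub {V : Type*} [AddCommGroup V] [Module ℝ V] (v : V) (h : ℝ)
    (u : V → ℝ) :
    centralDiff v h u = fun p ↦ u (p + h • v) - u (p + (-h) • v) := by
  ext p
  rw [centralDiff, neg_smul, ← sub_eq_add_neg]

namespace IsC11Extension

theorem mono (hu : IsC11Extension a u f' X ρ M₁ M₂) {X' : En n × ℝ} {ρ' : ℝ}
    (hρ : ρ' + dist X' X ≤ ρ) : IsC11Extension a u f' X' ρ' M₁ M₂ where
  continuousOn :=
    hu.continuousOn.mono (inter_subset_inter_left _ (Metric.closedBall_subset_closedBall' hρ))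
  harmonic p hp := hu.harmonic p ⟨Metric.ball_subset_ball' hρ hp.1, hp.2⟩
  hasFDerivAt x hx := hu.hasFDerivAt x <| Metric.closedBall_subset_closedBall'
    ((add_le_add_right (le_max_left _ _) _).trans hρ) hx
  norm_le x hx := hu.norm_le x <| Metric.closedBall_subset_closedBall'
    ((add_le_add_right (le_max_left _ _) _).trans hρ) hx
  lipschitz x hx x' hx' :=
    have hsub := Metric.closedBall_subset_closedBall'
      ((add_le_add_right (le_max_left _ _) ρ').trans hρ)
    hu.lipschitz x (hsub hx) x' (hsub hx')
  lipschitz_nonneg := hu.lipschitz_nonneg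

theorem neg (hu : IsC11Extension a u f' X ρ M₁ M₂) :
    IsC11Extension a (fun p ↦ -u p) (fun x ↦ -f' x) X ρ M₁ M₂ where
  continuousOn := hu.continuousOn.neg
  harmonic p hp := (hu.harmonic p hp).neg
  hasFDerivAt x hx := (hu.hasFDerivAt x hx).neg
  norm_le x hx := (norm_neg (f' x)).trans_le (hu.norm_le x hx)
  lipschitz x hx x' hx' := by
    rw [neg_sub_neg, norm_sub_rev]
    exact hu.lipschitz x hx x' hx'
  lipschitz_nonneg := hu.lipschitz_nonneg

theorem centralDiff_baseVec (hu : IsC11Extension a u f' X ρ M₁ M₂) (i : Fin n) (hk : 0 ≤ k) :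
    IsC11Extension a (centralDiff (baseVec i) k u)
      (fun x ↦ f' (x + k • EuclideanSpace.single i 1) - f' (x + (-k) • EuclideanSpace.single i 1))
      X (ρ - k) (2 * M₂ * k) (2 * M₂) := by
  have habs : |k| = k := abs_of_nonneg hk
  have habs' : |-k| = k := by rw [abs_neg, habs]
  have hmem {x : En n} (hx : x ∈ Metric.closedBall X.1 (ρ - k)) :
      x + k • EuclideanSpace.single i (1 : ℝ) ∈ Metric.closedBall X.1 ρ ∧
        x + (-k) • EuclideanSpace.single i (1 : ℝ) ∈ Metric.closedBall X.1 ρ :=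
    ⟨add_smul_single_mem_closedBall (by rwa [habs]) i,
      add_smul_single_mem_closedBall (by rwa [habs']) i⟩
  rw [centralDiff_eq_sub]
  refine ⟨?_, fun p hp ↦ ?_, fun x hx ↦ ?_, fun x hx ↦ ?_, fun x hx x' hx' ↦ ?_,
    mul_nonneg zero_le_two hu.lipschitz_nonneg⟩
  · exact (hu.continuousOn.comp (by fun_prop) fun p hp ↦
        add_smul_baseVec_mem_closedHalfCyl (by rwa [habs]) i).sub
      (hu.continuousOn.comp (by fun_prop) fun p hp ↦
        add_smul_baseVec_mem_closedHalfCyl (by rwa [habs']) i)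
  · exact (hu.harmonic _ (add_smul_baseVec_mem_halfCyl (by rwa [habs]) i)).comp_add_baseVec.sub
      (hu.harmonic _ (add_smul_baseVec_mem_halfCyl (by rwa [habs']) i)).comp_add_baseVec
  · have hshift (t : ℝ) (z : En n) :
        ((z, 0) : En n × ℝ) + t • baseVec i = (z + t • EuclideanSpace.single i 1, 0) := by
      simp [baseVec]
    simp only [hshift]
    exact ((hasFDerivAt_comp_add_right _).2 (hu.hasFDerivAt _ (hmem hx).1)).fun_sub
      ((hasFDerivAt_comp_add_right _).2 (hu.hasFDerivAt _ (hmem hx).2))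
  · refine (hu.lipschitz _ (hmem hx).1 _ (hmem hx).2).trans_eq ?_
    rw [add_sub_add_left_eq_sub, ← sub_smul, norm_smul_single, sub_neg_eq_add,
      abs_of_nonneg (by linarith)]
    ring
  · have hadd := hu.lipschitz _ (hmem hx).1 _ (hmem hx').1
    have hsub := hu.lipschitz _ (hmem hx).2 _ (hmem hx').2
    rw [add_sub_add_right_eq_sub] at hadd hsub
    rw [sub_sub_sub_comm]
    exact (norm_sub_le _ _).trans (by linarith)

end IsC11Extension

end HalfCylinder

section TangentialEstimates

variable {n : ℕ} {a : ℝ} {u : En n × ℝ → ℝ} {f' : En n → En n →L[ℝ] ℝ} {X p : En n × ℝ}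
  {ρ A B D M M₁ M₂ h : ℝ} {i j : Fin n}

/-- A quadratic polynomial which is a strict supersolution of the `a`-harmonic equation for `D`
large, vanishes at `X` and grows linearly away from the hyperplane `{x_j = X_j}`; it dominates the
odd part of an `a`-harmonic function with respect to this hyperplane. -/
def reflectionBarrier (A B D : ℝ) (j : Fin n) (X p : En n × ℝ) : ℝ :=
  A * (‖p.1 - X.1‖ ^ 2 + (p.2 - X.2) ^ 2) + B * (p.1 j - X.1 j) - D * (p.1 j - X.1 j) ^ 2

theorem contDiff_reflectionBarrier : ContDiff ℝ 2 (reflectionBarrier A B D j X) := by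
  unfold reflectionBarrier
  have hnorm : ContDiff ℝ 2 fun p : En n × ℝ ↦ ‖p.1 - X.1‖ ^ 2 :=
    (contDiff_fst.sub contDiff_const).norm_sq ℝ
  fun_prop

theorem deriv_quadratic (c₀ c₁ c₂ : ℝ) :
    deriv (fun t : ℝ ↦ c₀ + c₁ * t + c₂ * t ^ 2) = fun t ↦ c₁ + 2 * c₂ * t := by
  ext t
  have h : HasDerivAt (fun t : ℝ ↦ c₀ + c₁ * t + c₂ * t ^ 2)
      (c₁ * 1 + c₂ * (((2 : ℕ) : ℝ) * t ^ (2 - 1))) t :=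
    (((hasDerivAt_id t).const_mul c₁).const_add c₀).add ((hasDerivAt_pow 2 t).const_mul c₂)
  rw [h.deriv]
  norm_num
  ring

theorem D2_of_line_quadratic {c₀ c₁ c₂ : ℝ} {v : En n × ℝ} (hu : ContDiffAt ℝ 2 u p)
    (hline : ∀ t : ℝ, u (p + t • v) = c₀ + c₁ * t + c₂ * t ^ 2) : D2 u p v = 2 * c₂ := by
  rw [D2_eq_iteratedDeriv_line hu, funext hline, iteratedDeriv_succ, iteratedDeriv_one,
    deriv_quadratic]
  simp

theorem D2_reflectionBarrier_baseVec :
    D2 (reflectionBarrier A B D j X) p (baseVec i) = 2 * (A - if i = j then D else 0) := by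
  have hnorm (t : ℝ) : ‖(p + t • baseVec i).1 - X.1‖ ^ 2 =
      ‖p.1 - X.1‖ ^ 2 + 2 * (p.1 i - X.1 i) * t + t ^ 2 := by
    rw [show (p + t • baseVec i).1 - X.1 = (p.1 - X.1) + t • EuclideanSpace.single i (1 : ℝ) by
        simp only [baseVec, Prod.smul_mk, smul_eq_mul, mul_zero, Prod.fst_add]; abel,
      norm_add_sq_real, norm_smul_single, sq_abs, inner_smul_right,
      EuclideanSpace.inner_single_right]
    simp only [PiLp.sub_apply, Real.ringHom_apply, one_mul, add_left_inj, add_right_inj]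
    ring
  have hcoord (t : ℝ) : (p + t • baseVec i).1 j = p.1 j + if i = j then t else 0 := by
    split_ifs with hij <;> simp [baseVec, hij, Ne.symm]
  refine D2_of_line_quadratic (c₀ := reflectionBarrier A B D j X p)
    (c₁ := 2 * A * (p.1 i - X.1 i) + if i = j then B - 2 * D * (p.1 j - X.1 j) else 0)
    contDiff_reflectionBarrier.contDiffAt fun t ↦ ?_
  have hsnd : (p + t • baseVec i).2 = p.2 := by simp [baseVec]
  simp only [reflectionBarrier, hnorm, hcoord, hsnd]
  split_ifs <;> ring

theorem reflectionBarrier_add_smul_vertical (t : ℝ) :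
    reflectionBarrier A B D j X (p + t • (0, 1)) =
      reflectionBarrier A B D j X p + 2 * A * (p.2 - X.2) * t + A * t ^ 2 := by
  simp only [reflectionBarrier, Prod.fst_add, Prod.snd_add, Prod.smul_fst, Prod.smul_snd,
    smul_zero, add_zero, smul_eq_mul, mul_one]
  ring

theorem aLap_reflectionBarrier_neg (ha0 : 0 ≤ a) (ha1 : a ≤ 1) (hA : 0 < A) (hX : 0 ≤ X.2)
    (hp : 0 < p.2) : aLap a (reflectionBarrier A B ((n + 3) * A) j X) p < 0 := by
  have hC : ContDiffAt ℝ 2 (reflectionBarrier A B ((n + 3) * A) j X) p :=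
    contDiff_reflectionBarrier.contDiffAt
  have hsum : ∑ i : Fin n, D2 (reflectionBarrier A B ((n + 3) * A) j X) p (baseVec i) =
      2 * (n * A - (n + 3) * A) := by
    simp only [D2_reflectionBarrier_baseVec, ← Finset.mul_sum, Finset.sum_sub_distrib,
      Finset.sum_ite_eq', Finset.mem_univ, if_true, Finset.sum_const, Finset.card_univ,
      Fintype.card_fin, nsmul_eq_mul]
  have hD2 : D2 (reflectionBarrier A B ((n + 3) * A) j X) p (0, 1) = 2 * A :=
    D2_of_line_quadratic hC reflectionBarrier_add_smul_vertical
  have hfderiv : fderiv ℝ (reflectionBarrier A B ((n + 3) * A) j X) p (0, 1) =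
      2 * A * (p.2 - X.2) := by
    simp only [fderiv_eq_deriv_line (hC.differentiableAt two_ne_zero),
      reflectionBarrier_add_smul_vertical, deriv_quadratic, mul_zero, add_zero]
  have hdrift : a / p.2 * (2 * A * (p.2 - X.2)) ≤ 2 * A := by
    rw [div_mul_eq_mul_div, div_le_iff₀ hp]
    have : a * (p.2 - X.2) ≤ p.2 := by nlinarith
    nlinarith
  simp only [baseVec] at hsum
  rw [aLap, lap, hsum, hD2, hfderiv]
  linarith

theorem le_reflectionBarrier {C : ℝ} (hD : 0 ≤ D) (hp : X.1 j ≤ p.1 j) (hpρ : dist p X ≤ ρ) :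
    A * (‖p.1 - X.1‖ ^ 2 + (p.2 - X.2) ^ 2) + C * (p.1 j - X.1 j) ≤
      reflectionBarrier A (D * ρ + C) D j X p := by
  have hcoord : p.1 j - X.1 j ≤ ρ := by
    have hle := (Real.le_norm_self _).trans (PiLp.norm_apply_le (p.1 - X.1) j)
    exact hle.trans ((norm_fst_le (p - X)).trans (by rwa [← dist_eq_norm]))
  rw [reflectionBarrier]
  nlinarith [mul_nonneg (mul_nonneg hD (sub_nonneg.2 hp)) (sub_nonneg.2 hcoord)]

theorem reflectAt_mem_halfCyl (hp : p ∈ halfCyl X ρ) (j : Fin n) :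
    reflectAt j (X.1 j) p ∈ halfCyl X ρ :=
  ⟨(dist_reflectAt j X p).trans_lt hp.1, (show 0 < p.2 from hp.2).trans_eq (reflectAt_snd ..).symm⟩

theorem reflectAt_mem_closedHalfCyl (hp : p ∈ closedHalfCyl X ρ) (j : Fin n) :
    reflectAt j (X.1 j) p ∈ closedHalfCyl X ρ :=
  ⟨(dist_reflectAt j X p).trans_le hp.1, (show 0 ≤ p.2 from hp.2).trans_eq (reflectAt_snd ..).symm⟩

theorem dist_sq_le_norm_sq_add_sq (X p : En n × ℝ) :
    dist p X ^ 2 ≤ ‖p.1 - X.1‖ ^ 2 + (p.2 - X.2) ^ 2 := by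
  rw [Prod.dist_eq, dist_eq_norm, Real.dist_eq]
  rcases max_choice ‖p.1 - X.1‖ |p.2 - X.2| with h | h <;> rw [h]
  · exact le_add_of_nonneg_right (sq_nonneg _)
  · rw [sq_abs]
    exact le_add_of_nonneg_left (sq_nonneg _)

namespace IsC11Extension

theorem norm_bound_nonneg (hu : IsC11Extension a u f' X ρ M₁ M₂) (hρ : 0 ≤ ρ) : 0 ≤ M₁ :=
  (norm_nonneg _).trans (hu.norm_le X.1 (Metric.mem_closedBall_self hρ))

theorem abs_trace_sub_le (hu : IsC11Extension a u f' X ρ M₁ M₂) {x x' : En n}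
    (hx : x ∈ Metric.closedBall X.1 ρ) (hx' : x' ∈ Metric.closedBall X.1 ρ) :
    |u (x, 0) - u (x', 0)| ≤ M₁ * ‖x - x'‖ :=
  (convex_closedBall X.1 ρ).norm_image_sub_le_of_norm_hasFDerivWithin_le
    (fun z hz ↦ (hu.hasFDerivAt z hz).hasFDerivWithinAt) hu.norm_le hx' hx

theorem sub_reflectAt_le_of_snd_eq_zero (hu : IsC11Extension a u f' X ρ M₁ M₂)
    (hp : dist p X ≤ ρ) (hp2 : p.2 = 0) (hpj : X.1 j ≤ p.1 j) :
    u p - u (reflectAt j (X.1 j) p) ≤ 2 * M₁ * (p.1 j - X.1 j) := by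
  have hfst {q : En n × ℝ} (hq : dist q X ≤ ρ) : q.1 ∈ Metric.closedBall X.1 ρ :=
    (le_max_left _ _).trans hq
  have hbound := hu.abs_trace_sub_le (hfst hp) (hfst ((dist_reflectAt j X p).trans_le hp))
  have hdiff : p.1 - (reflectAt j (X.1 j) p).1 =
      (2 * (p.1 j - X.1 j)) • EuclideanSpace.single j 1 := by
    simp [reflectAt, baseVec]
  have htrace {q : En n × ℝ} (hq : q.2 = 0) : (q.1, (0 : ℝ)) = q := by rw [← hq]
  rw [htrace hp2, htrace ((reflectAt_snd ..).trans hp2), hdiff, norm_smul_single,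
    abs_of_nonneg (by linarith : 0 ≤ 2 * (p.1 j - X.1 j))] at hbound
  linarith [le_of_abs_le hbound]

theorem sub_reflectAt_le_on_boundary (hu : IsC11Extension a u f' X ρ M₁ M₂)
    (hM : ∀ q ∈ closedHalfCyl X ρ, |u q| ≤ M) (hA : 0 ≤ A) (hAM : 2 * M ≤ A * ρ ^ 2)
    (hD : 0 ≤ D) (hp : p ∈ closedHalfCyl X ρ) (hpj : X.1 j ≤ p.1 j)
    (hpb : p ∉ halfCyl X ρ ∩ {q | X.1 j < q.1 j}) :
    u p - u (reflectAt j (X.1 j) p) ≤ reflectionBarrier A (D * ρ + 2 * M₁) D j X p := by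
  have hpX : dist p X ≤ ρ := hp.1
  have hM₁ := hu.norm_bound_nonneg (dist_nonneg.trans hpX)
  refine le_trans ?_ (le_reflectionBarrier hD hpj hpX)
  have hlin : 0 ≤ 2 * M₁ * (p.1 j - X.1 j) := mul_nonneg (by linarith) (sub_nonneg.2 hpj)
  have hquad : 0 ≤ A * (‖p.1 - X.1‖ ^ 2 + (p.2 - X.2) ^ 2) := by positivity
  rcases hpX.lt_or_eq with hlt | heq
  · rcases eq_or_lt_of_le (show 0 ≤ p.2 from hp.2) with hp2 | hp2
    · linarith [hu.sub_reflectAt_le_of_snd_eq_zero hpX hp2.symm hpj]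
    · have hplane : p.1 j = X.1 j := le_antisymm (not_lt.1 fun h ↦ hpb ⟨⟨hlt, hp2⟩, h⟩) hpj
      have hfix : reflectAt j (X.1 j) p = p := by
        rw [reflectAt, hplane, sub_self, mul_zero, zero_smul, sub_zero]
      rw [hfix, sub_self]
      exact add_nonneg hquad hlin
  · have hsphere : A * ρ ^ 2 ≤ A * (‖p.1 - X.1‖ ^ 2 + (p.2 - X.2) ^ 2) :=
      mul_le_mul_of_nonneg_left (heq ▸ dist_sq_le_norm_sq_add_sq X p) hA
    linarith [le_of_abs_le (hM p hp),
      neg_le_of_abs_le (hM _ (reflectAt_mem_closedHalfCyl hp j))]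

theorem sub_reflectAt_le (ha0 : 0 ≤ a) (ha1 : a ≤ 1) (hu : IsC11Extension a u f' X ρ M₁ M₂)
    (hX : 0 ≤ X.2) (hM : ∀ q ∈ closedHalfCyl X ρ, |u q| ≤ M) (hA : 0 < A)
    (hAM : 2 * M ≤ A * ρ ^ 2) (hp : p ∈ closedHalfCyl X ρ) (hpj : X.1 j ≤ p.1 j) :
    u p - u (reflectAt j (X.1 j) p) ≤
      reflectionBarrier A ((n + 3) * A * ρ + 2 * M₁) ((n + 3) * A) j X p := by
  have hcoord : Continuous fun q : En n × ℝ ↦ q.1 j := by fun_prop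
  have hodd {q : En n × ℝ} (hq : q ∈ halfCyl X ρ) :
      IsAHarmonicAt a (fun q ↦ u q - u (reflectAt j (X.1 j) q)) q :=
    (hu.harmonic q hq).sub (hu.harmonic _ (reflectAt_mem_halfCyl hq j)).comp_reflectAt
  have hmax := nonpos_of_aLap_pos (a := a) (p := p)
    (u := fun q ↦ u q - u (reflectAt j (X.1 j) q) -
      reflectionBarrier A ((n + 3) * A * ρ + 2 * M₁) ((n + 3) * A) j X q)
    (K := closedHalfCyl X ρ ∩ {q | X.1 j ≤ q.1 j}) (O := halfCyl X ρ ∩ {q | X.1 j < q.1 j})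
    (isCompact_closedHalfCyl.inter_right (isClosed_le continuous_const hcoord))
    (isOpen_halfCyl.inter (isOpen_lt continuous_const hcoord))
    (inter_subset_inter halfCyl_subset_closedHalfCyl fun q (hq : X.1 j < q.1 j) ↦ hq.le)
    ?_ (fun q hq ↦ (hodd hq.1).1.sub contDiff_reflectionBarrier.contDiffAt) (fun q hq ↦ ?_)
    (fun q hq ↦ sub_nonpos.2 ?_) ⟨hp, hpj⟩
  · exact sub_nonpos.1 hmax
  · have hcont := hu.continuousOn.mono (inter_subset_left (t := {q | X.1 j ≤ q.1 j}))
    refine (hcont.sub ?_).sub contDiff_reflectionBarrier.continuous.continuousOn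
    exact hu.continuousOn.comp (continuous_reflectAt j _).continuousOn fun q hq ↦
      reflectAt_mem_closedHalfCyl hq.1 j
  · rw [aLap_sub (hodd hq.1).1 contDiff_reflectionBarrier.contDiffAt, (hodd hq.1).2, zero_sub,
      neg_pos]
    exact aLap_reflectionBarrier_neg ha0 ha1 hA hX hq.1.2
  · exact hu.sub_reflectAt_le_on_boundary hM hA.le hAM (by positivity) hq.1.1 hq.1.2 hq.2

theorem centralDiff_le (ha0 : 0 ≤ a) (ha1 : a ≤ 1) (hu : IsC11Extension a u f' X ρ M₁ M₂)
    (hX : 0 ≤ X.2) (hM : ∀ q ∈ closedHalfCyl X ρ, |u q| ≤ M) (hρ : 0 < ρ) (hh0 : 0 ≤ h)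
    (hhρ : h ≤ ρ) :
    centralDiff (baseVec j) h u X ≤ 2 * ((n + 3) * M / ρ + M₁) * h := by
  have hXh : X + h • baseVec j ∈ closedHalfCyl X ρ :=
    add_smul_baseVec_mem_closedHalfCyl
      ⟨Metric.mem_closedBall_self (by rwa [abs_of_nonneg hh0, sub_nonneg]), hX⟩ j
  have hcoord : (X + h • baseVec j).1 j = X.1 j + h := by simp [baseVec]
  have hreflect : reflectAt j (X.1 j) (X + h • baseVec j) = X - h • baseVec j := by
    rw [reflectAt, hcoord]
    module
  have hbarrier {A B D : ℝ} : reflectionBarrier A B D j X (X + h • baseVec j) =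
      A * h ^ 2 + B * h - D * h ^ 2 := by
    have hfst : (X + h • baseVec j).1 - X.1 = h • EuclideanSpace.single j 1 := by simp [baseVec]
    have hsnd : (X + h • baseVec j).2 = X.2 := by simp [baseVec]
    rw [reflectionBarrier, hfst, hsnd, hcoord, norm_smul_single, sq_abs]
    ring
  have hM0 : 0 ≤ M := (abs_nonneg _).trans (hM _ hXh)
  have hA {A : ℝ} (hA : 2 * M / ρ ^ 2 < A) :
      centralDiff (baseVec j) h u X ≤ ((n + 3) * A * ρ + 2 * M₁) * h := by
    have hA0 : 0 < A := lt_of_le_of_lt (by positivity) hA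
    have hle := hu.sub_reflectAt_le ha0 ha1 hX hM hA0
      ((div_le_iff₀ (by positivity)).1 hA.le) hXh (by rw [hcoord]; linarith)
    rw [hreflect, hbarrier] at hle
    have : 0 ≤ (n + 2) * A * h ^ 2 := by positivity
    rw [centralDiff]
    linarith
  have hlim : Tendsto (fun A : ℝ ↦ ((n + 3) * A * ρ + 2 * M₁) * h) (𝓝[>] (2 * M / ρ ^ 2))
      (𝓝 (((n + 3) * (2 * M / ρ ^ 2) * ρ + 2 * M₁) * h)) :=
    (Continuous.tendsto (by fun_prop) _).mono_left nhdsWithin_le_nhds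
  refine (ge_of_tendsto hlim (eventually_mem_nhdsWithin.mono fun A ↦ hA)).trans_eq ?_
  field_simp

theorem abs_centralDiff_le (ha0 : 0 ≤ a) (ha1 : a ≤ 1)
    (hu : IsC11Extension a u f' X ρ M₁ M₂) (hX : 0 ≤ X.2)
    (hM : ∀ q ∈ closedHalfCyl X ρ, |u q| ≤ M) (hρ : 0 < ρ) (hh0 : 0 ≤ h) (hhρ : h ≤ ρ) :
    |centralDiff (baseVec j) h u X| ≤ 2 * ((n + 3) * M / ρ + M₁) * h := by
  have hneg := hu.neg.centralDiff_le (j := j) ha0 ha1 hX (M := M) (by simpa using hM) hρ hh0 hhρ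
  refine abs_le.2 ⟨?_, hu.centralDiff_le ha0 ha1 hX hM hρ hh0 hhρ⟩
  rw [centralDiff] at hneg ⊢
  linarith

end IsC11Extension

end TangentialEstimates

section DerivativeEstimates

theorem abs_fderiv_le_of_centralDiff {V : Type*} [NormedAddCommGroup V] [NormedSpace ℝ V]
    {u : V → ℝ} {p v : V} {C : ℝ} (hu : DifferentiableAt ℝ u p)
    (hC : ∀ᶠ h in 𝓝[>] (0 : ℝ), |centralDiff v h u p| ≤ 2 * C * h) : |fderiv ℝ u p v| ≤ C := by
  have hderiv : HasDerivAt (fun h : ℝ ↦ centralDiff v h u p) (2 * fderiv ℝ u p v) 0 := by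
    have hsub : HasDerivAt (fun h : ℝ ↦ p - h • v) (-v) 0 := by
      simpa only [smul_neg, ← sub_eq_add_neg] using hasDerivAt_line p (-v) 0
    refine ((hu.hasFDerivAt.comp_hasDerivAt_of_eq 0 (hasDerivAt_line p v 0) (by simp)).sub
      (hu.hasFDerivAt.comp_hasDerivAt_of_eq 0 hsub (by simp))).congr_deriv ?_
    rw [map_neg]
    ring
  have hlim := hderiv.tendsto_slope_zero_right.abs
  have hle : |2 * fderiv ℝ u p v| ≤ 2 * C := by
    refine le_of_tendsto hlim ?_
    filter_upwards [hC, self_mem_nhdsWithin] with h hh (hpos : 0 < h)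
    have hzero : centralDiff v 0 u p = 0 := by simp [centralDiff]
    rw [zero_add, hzero, sub_zero, smul_eq_mul, abs_mul, abs_inv, abs_of_pos hpos,
      inv_mul_le_iff₀ hpos]
    linarith
  rw [abs_mul, abs_two] at hle
  linarith

namespace IsC11Extension

variable {n : ℕ} {a : ℝ} {u : En n × ℝ → ℝ} {f' : En n → En n →L[ℝ] ℝ} {X : En n × ℝ}
  {ρ M M₁ M₂ : ℝ}

theorem abs_fderiv_baseVec_le (ha0 : 0 ≤ a) (ha1 : a ≤ 1)
    (hu : IsC11Extension a u f' X ρ M₁ M₂) (hX : 0 < X.2)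
    (hM : ∀ q ∈ closedHalfCyl X ρ, |u q| ≤ M) (hρ : 0 < ρ) (j : Fin n) :
    |fderiv ℝ u X (baseVec j)| ≤ (n + 3) * M / ρ + M₁ := by
  have hdiff := (hu.harmonic X ⟨Metric.mem_ball_self hρ, hX⟩).1.differentiableAt two_ne_zero
  refine abs_fderiv_le_of_centralDiff hdiff ?_
  filter_upwards [Ioo_mem_nhdsGT hρ] with h hh
  exact hu.abs_centralDiff_le ha0 ha1 hX.le hM hρ hh.1.le hh.2.le

theorem abs_fderiv_centralDiff_le (ha0 : 0 ≤ a) (ha1 : a ≤ 1)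
    (hu : IsC11Extension a u f' X (2 * ρ) M₁ M₂) (hX : 0 < X.2)
    (hM : ∀ q ∈ closedHalfCyl X (2 * ρ), |u q| ≤ M) {k : ℝ} (hk0 : 0 < k) (hkρ : k ≤ ρ)
    (i j : Fin n) :
    |fderiv ℝ (centralDiff (baseVec i) k u) X (baseVec j)| ≤
      2 * ((n + 3) / ρ * ((n + 3) * M / ρ + M₁) + M₂) * k := by
  have hρ : 0 < ρ := hk0.trans_le hkρ
  have hdiff : ∀ p ∈ closedHalfCyl X ρ, |centralDiff (baseVec i) k u p| ≤
      2 * ((n + 3) * M / ρ + M₁) * k := fun p hp ↦ by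
    have hpX : ρ + dist p X ≤ 2 * ρ := by linarith [show dist p X ≤ ρ from hp.1]
    exact (hu.mono hpX).abs_centralDiff_le ha0 ha1 hp.2
      (fun q hq ↦ hM q ⟨Metric.closedBall_subset_closedBall' hpX hq.1, hq.2⟩) hρ hk0.le hkρ
  have hmono : ρ + dist X X ≤ 2 * ρ - k := by rw [dist_self]; linarith
  refine (((hu.centralDiff_baseVec i hk0.le).mono hmono).abs_fderiv_baseVec_le ha0 ha1 hX hdiff
    hρ j).trans_eq ?_
  ring

theorem abs_fderiv_fderiv_baseVec_le (ha0 : 0 ≤ a) (ha1 : a ≤ 1)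
    (hu : IsC11Extension a u f' X (2 * ρ) M₁ M₂) (hX : 0 < X.2)
    (hM : ∀ q ∈ closedHalfCyl X (2 * ρ), |u q| ≤ M) (hρ : 0 < ρ) (i j : Fin n) :
    |fderiv ℝ (fun q ↦ fderiv ℝ u q (baseVec j)) X (baseVec i)| ≤
      (n + 3) / ρ * ((n + 3) * M / ρ + M₁) + M₂ := by
  have hmem {k : ℝ} (hk : |k| < 2 * ρ) : X + k • baseVec i ∈ halfCyl X (2 * ρ) :=
    add_smul_baseVec_mem_halfCyl ⟨Metric.mem_ball_self (by linarith), hX⟩ i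
  have hdiff {k : ℝ} (hk : |k| < 2 * ρ) :
      HasFDerivAt (fun q ↦ u (q + k • baseVec i)) (fderiv ℝ u (X + k • baseVec i)) X :=
    (hasFDerivAt_comp_add_right _).2
      ((hu.harmonic _ (hmem hk)).1.differentiableAt two_ne_zero).hasFDerivAt
  have hC2 : ContDiffAt ℝ 2 u X :=
    (hu.harmonic X ⟨Metric.mem_ball_self (by linarith), hX⟩).1
  refine abs_fderiv_le_of_centralDiff (hasFDerivAt_fderiv_apply hC2 _).differentiableAt ?_
  filter_upwards [Ioo_mem_nhdsGT hρ] with k ⟨hk0, hkρ⟩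
  have hk : |k| < 2 * ρ := by rw [abs_of_pos hk0]; linarith
  have hcomm : fderiv ℝ (centralDiff (baseVec i) k u) X (baseVec j) =
      centralDiff (baseVec i) k (fun q ↦ fderiv ℝ u q (baseVec j)) X := by
    rw [centralDiff_eq_sub, centralDiff_eq_sub,
      ((hdiff hk).fun_sub (hdiff (k := -k) (by rwa [abs_neg]))).fderiv, sub_apply]
  rw [← hcomm]
  exact hu.abs_fderiv_centralDiff_le ha0 ha1 hX hM hk0 hkρ.le i j

end IsC11Extension

end DerivativeEstimates

section OneVariable

/-- On `s`, the function `v` has first and second derivatives `v₁` and `v₂`, and the Bessel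
operator `v'' + (a / y) v'` is bounded by `Q`. -/
structure HasBesselBound (a Q : ℝ) (v v₁ v₂ : ℝ → ℝ) (s : Set ℝ) : Prop where
  hasDerivAt : ∀ y ∈ s, HasDerivAt v (v₁ y) y
  hasDerivAt_deriv : ∀ y ∈ s, HasDerivAt v₁ (v₂ y) y
  abs_bessel_le : ∀ y ∈ s, |v₂ y + a / y * v₁ y| ≤ Q

namespace HasBesselBound

variable {a b Q M Y ρ x y : ℝ} {v v₁ v₂ : ℝ → ℝ} {s : Set ℝ}

theorem mono (hv : HasBesselBound a Q v v₁ v₂ s) {t : Set ℝ} (hts : t ⊆ s) :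
    HasBesselBound a Q v v₁ v₂ t :=
  ⟨fun y hy ↦ hv.hasDerivAt y (hts hy), fun y hy ↦ hv.hasDerivAt_deriv y (hts hy),
    fun y hy ↦ hv.abs_bessel_le y (hts hy)⟩

theorem nonneg (hv : HasBesselBound a Q v v₁ v₂ s) (hy : y ∈ s) : 0 ≤ Q :=
  (abs_nonneg _).trans (hv.abs_bessel_le y hy)

theorem hasDerivAt_flux (hv : HasBesselBound a Q v v₁ v₂ s) (hy : y ∈ s) (hy0 : 0 < y) :
    HasDerivAt (fun t ↦ t ^ a * v₁ t) (y ^ a * (v₂ y + a / y * v₁ y)) y := by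
  refine ((Real.hasDerivAt_rpow_const (.inl hy0.ne')).mul (hv.hasDerivAt_deriv y hy)).congr_deriv ?_
  rw [Real.rpow_sub_one hy0.ne']
  ring

theorem abs_flux_sub_le (ha0 : 0 ≤ a) (hv : HasBesselBound a Q v v₁ v₂ s) (hs : Convex ℝ s)
    (hsb : s ⊆ Ioc 0 b) (hx : x ∈ s) (hy : y ∈ s) :
    |y ^ a * v₁ y - x ^ a * v₁ x| ≤ Q * b ^ a * |y - x| := by
  have hbound : ∀ t ∈ s, ‖t ^ a * (v₂ t + a / t * v₁ t)‖ ≤ Q * b ^ a := fun t ht ↦ by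
    have ht0 : 0 ≤ t := (hsb ht).1.le
    rw [Real.norm_eq_abs, abs_mul, abs_of_nonneg (Real.rpow_nonneg ht0 a), mul_comm Q]
    exact mul_le_mul (Real.rpow_le_rpow ht0 (hsb ht).2 ha0) (hv.abs_bessel_le t ht) (abs_nonneg _)
      (Real.rpow_nonneg (ht0.trans (hsb ht).2) a)
  exact hs.norm_image_sub_le_of_norm_hasDerivWithin_le
    (fun t ht ↦ (hv.hasDerivAt_flux ht (hsb ht).1).hasDerivWithinAt) hbound hx hy

theorem exists_flux_limit (ha0 : 0 ≤ a) (hv : HasBesselBound a Q v v₁ v₂ (Ioo 0 b)) :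
    ∃ G : ℝ, ∀ y ∈ Ioo 0 b, |y ^ a * v₁ y - G| ≤ Q * y ^ a * y := by
  obtain hb | hb := le_or_gt b 0
  · exact ⟨0, fun y hy ↦ absurd (hy.1.trans hy.2) hb.not_gt⟩
  have hQ : 0 ≤ Q := hv.nonneg (y := b / 2) ⟨by linarith, by linarith⟩
  have hlip : LipschitzOnWith (Q * b ^ a).toNNReal (fun t ↦ t ^ a * v₁ t) (Ioo 0 b) := by
    refine LipschitzOnWith.of_dist_le_mul fun y hy x hx ↦ ?_
    rw [Real.coe_toNNReal _ (by positivity), Real.dist_eq, Real.dist_eq]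
    exact hv.abs_flux_sub_le ha0 (convex_Ioo 0 b) Ioo_subset_Ioc_self hx hy
  obtain ⟨F, hF, hFeq⟩ := hlip.extend_real
  refine ⟨F 0, fun y hy ↦ ?_⟩
  have hlim : Tendsto (fun x ↦ |y ^ a * v₁ y - F x|) (𝓝[>] 0) (𝓝 |y ^ a * v₁ y - F 0|) :=
    (Continuous.tendsto (continuous_const.sub hF.continuous).abs 0).mono_left nhdsWithin_le_nhds
  refine le_of_tendsto hlim ?_
  filter_upwards [Ioo_mem_nhdsGT hy.1] with x hx
  rw [← hFeq ⟨hx.1, hx.2.trans hy.2⟩]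
  refine ((hv.mono (Ioc_subset_Ioo_right hy.2)).abs_flux_sub_le ha0 (convex_Ioc 0 y) Subset.rfl
    ⟨hx.1, hx.2.le⟩ (right_mem_Ioc.2 hy.1)).trans (mul_le_mul_of_nonneg_left ?_ ?_)
  · rw [abs_of_pos (sub_pos.2 hx.2)]
    linarith [hx.1]
  · exact mul_nonneg hQ (Real.rpow_nonneg hy.1.le a)

theorem exists_expansion_at_zero (ha0 : 0 ≤ a) (ha1 : a < 1)
    (hv : HasBesselBound a Q v v₁ v₂ (Ioo 0 b)) (hc : ContinuousOn v (Ico 0 b)) :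
    ∃ G : ℝ, ∀ y ∈ Ioo 0 b, |v y - v 0 - y ^ (1 - a) * G| ≤ Q * y ^ 2 := by
  obtain ⟨G, hG⟩ := hv.exists_flux_limit ha0
  refine ⟨G / (1 - a), fun y hy ↦ ?_⟩
  have hcont : ContinuousOn (fun t ↦ v t - t ^ (1 - a) * (G / (1 - a))) (Icc 0 y) :=
    (hc.mono (Icc_subset_Ico_right hy.2)).sub
      ((Real.continuous_rpow_const (sub_nonneg.2 ha1.le)).mul_const _).continuousOn
  have hderiv : ∀ t ∈ Ioo 0 y, HasDerivAt (fun t ↦ v t - t ^ (1 - a) * (G / (1 - a)))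
      (v₁ t - t ^ (-a) * G) t := fun t ht ↦ by
    refine ((hv.hasDerivAt t ⟨ht.1, ht.2.trans hy.2⟩).sub
      ((Real.hasDerivAt_rpow_const (.inl ht.1.ne')).mul_const _)).congr_deriv ?_
    have : 1 - a ≠ 0 := (sub_pos.2 ha1).ne'
    rw [show 1 - a - 1 = -a by ring]
    field_simp
  obtain ⟨t, ht, hslope⟩ := exists_hasDerivAt_eq_slope _ _ hy.1 hcont hderiv
  have hbound : |v₁ t - t ^ (-a) * G| ≤ Q * t := by
    have hta : 0 < t ^ a := Real.rpow_pos_of_pos ht.1 a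
    have hfactor : v₁ t - t ^ (-a) * G = (t ^ a)⁻¹ * (t ^ a * v₁ t - G) := by
      rw [Real.rpow_neg ht.1.le]
      field_simp
    rw [hfactor, abs_mul, abs_inv, abs_of_pos hta, inv_mul_le_iff₀ hta]
    exact (hG t ⟨ht.1, ht.2.trans hy.2⟩).trans_eq (by ring)
  have hvalue : v y - v 0 - y ^ (1 - a) * (G / (1 - a)) = y * (v₁ t - t ^ (-a) * G) := by
    rw [hslope, Real.zero_rpow (sub_pos.2 ha1).ne', sub_zero]
    field_simp [hy.1.ne']
    ring
  rw [hvalue, abs_mul, abs_of_pos hy.1]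
  have hQ : 0 ≤ Q := hv.nonneg hy
  calc y * |v₁ t - t ^ (-a) * G| ≤ y * (Q * y) :=
        mul_le_mul_of_nonneg_left (hbound.trans (mul_le_mul_of_nonneg_left ht.2.le hQ)) hy.1.le
    _ = Q * y ^ 2 := by ring

theorem abs_deriv_le (ha0 : 0 ≤ a) (hY : 0 ≤ Y) (hρ : 0 < ρ)
    (hv : HasBesselBound a Q v v₁ v₂ (Ioo Y (Y + ρ))) (hc : ContinuousOn v (Icc Y (Y + ρ)))
    (hM : ∀ t ∈ Icc Y (Y + ρ), |v t| ≤ M) (hy : y ∈ Ioo Y (Y + ρ)) :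
    |v₁ y| ≤ (2 * M / ρ + Q * ρ) * (ρ / (y - Y)) ^ a := by
  have hYρ : Y < Y + ρ := by linarith
  obtain ⟨c, hc, hslope⟩ := exists_hasDerivAt_eq_slope v v₁ hYρ hc hv.hasDerivAt
  have hc0 : 0 < c := hY.trans_lt hc.1
  have hy0 : 0 < y := hY.trans_lt hy.1
  have hQ : 0 ≤ Q := hv.nonneg hy
  have hv₁c : |v₁ c| ≤ 2 * M / ρ := by
    rw [hslope, add_sub_cancel_left, abs_div, abs_of_pos hρ]
    refine div_le_div_of_nonneg_right ((abs_sub _ _).trans ?_) hρ.le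
    linarith [hM _ (left_mem_Icc.2 hYρ.le), hM _ (right_mem_Icc.2 hYρ.le)]
  have hflux : y ^ a * |v₁ y| ≤ (2 * M / ρ + Q * ρ) * (Y + ρ) ^ a := by
    have hsub := hv.abs_flux_sub_le ha0 (convex_Ioo Y (Y + ρ))
      (fun t ht ↦ ⟨hY.trans_lt ht.1, ht.2.le⟩) hc hy
    have hdist : |y - c| ≤ ρ := abs_le.2 ⟨by linarith [hy.1, hc.2], by linarith [hy.2, hc.1]⟩
    calc y ^ a * |v₁ y| = |y ^ a * v₁ y| := by
          rw [abs_mul, abs_of_nonneg (Real.rpow_nonneg hy0.le a)]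
      _ ≤ |c ^ a * v₁ c| + |y ^ a * v₁ y - c ^ a * v₁ c| := by
          simpa using abs_add_le (c ^ a * v₁ c) (y ^ a * v₁ y - c ^ a * v₁ c)
      _ ≤ (Y + ρ) ^ a * (2 * M / ρ) + Q * (Y + ρ) ^ a * ρ := by
          rw [abs_mul, abs_of_nonneg (Real.rpow_nonneg hc0.le a)]
          gcongr
          · exact hc.2.le
          · exact hsub.trans (by gcongr)
      _ = (2 * M / ρ + Q * ρ) * (Y + ρ) ^ a := by ring
  have hratio : (Y + ρ) / y ≤ ρ / (y - Y) := by
    rw [div_le_div_iff₀ hy0 (sub_pos.2 hy.1)]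
    nlinarith [mul_nonneg hY (sub_nonneg.2 hy.2.le)]
  have hM0 : 0 ≤ M := (abs_nonneg _).trans (hM Y (left_mem_Icc.2 hYρ.le))
  calc |v₁ y| ≤ (2 * M / ρ + Q * ρ) * (Y + ρ) ^ a / y ^ a := by
        rwa [le_div_iff₀ (Real.rpow_pos_of_pos hy0 a), mul_comm]
    _ = (2 * M / ρ + Q * ρ) * ((Y + ρ) / y) ^ a := by
        rw [Real.div_rpow (by positivity) hy0.le, mul_div_assoc]
    _ ≤ (2 * M / ρ + Q * ρ) * (ρ / (y - Y)) ^ a := by gcongr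

theorem abs_sub_le (ha0 : 0 ≤ a) (ha1 : a < 1) (hY : 0 ≤ Y)
    (hv : HasBesselBound a Q v v₁ v₂ (Ioo Y (Y + ρ))) (hc : ContinuousOn v (Icc Y (Y + ρ)))
    (hM : ∀ t ∈ Icc Y (Y + ρ), |v t| ≤ M) (hy : y ∈ Ioo Y (Y + ρ)) :
    |v y - v Y| ≤ (2 * M + Q * ρ ^ 2) / (1 - a) * ((y - Y) / ρ) ^ (1 - a) := by
  have hρ : 0 < ρ := by linarith [hy.1, hy.2]
  have ha : 0 < 1 - a := sub_pos.2 ha1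
  have hderiv : ∀ t ∈ Ioo Y y,
      HasDerivAt (fun t ↦ (t - Y) ^ (1 - a)) ((1 - a) * (t - Y) ^ (-a)) t := fun t ht ↦ by
    simpa [show 1 - a - 1 = -a by ring] using
      ((hasDerivAt_id t).sub_const Y).rpow_const (p := 1 - a) (.inl (sub_pos.2 ht.1).ne')
  have hcont : ContinuousOn (fun t ↦ (t - Y) ^ (1 - a)) (Icc Y y) :=
    ((continuous_id.sub continuous_const).rpow_const fun _ ↦ .inr ha.le).continuousOn
  obtain ⟨z, hz, hratio⟩ := exists_ratio_hasDerivAt_eq_ratio_slope v v₁ hy.1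
    (hc.mono (Icc_subset_Icc_right hy.2.le))
    (fun t ht ↦ hv.hasDerivAt t ⟨ht.1, ht.2.trans hy.2⟩) _ _ hcont hderiv
  have hzY : 0 < z - Y := sub_pos.2 hz.1
  have hv₁z := hv.abs_deriv_le ha0 hY hρ hc hM ⟨hz.1, hz.2.trans hy.2⟩
  have hzpow : 0 < (z - Y) ^ a := Real.rpow_pos_of_pos hzY a
  have hyY : 0 ≤ (y - Y) ^ (1 - a) := Real.rpow_nonneg (sub_nonneg.2 hy.1.le) _
  have hvalue : v y - v Y = (y - Y) ^ (1 - a) / (1 - a) * ((z - Y) ^ a * v₁ z) := by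
    simp only [sub_self, Real.zero_rpow ha.ne', sub_zero, Real.rpow_neg hzY.le] at hratio
    field_simp at hratio ⊢
    linarith
  rw [hvalue, abs_mul, abs_mul, abs_of_nonneg (div_nonneg hyY ha.le), abs_of_pos hzpow]
  calc (y - Y) ^ (1 - a) / (1 - a) * ((z - Y) ^ a * |v₁ z|)
      ≤ (y - Y) ^ (1 - a) / (1 - a) *
          ((z - Y) ^ a * ((2 * M / ρ + Q * ρ) * (ρ / (z - Y)) ^ a)) := by gcongr
    _ = (2 * M + Q * ρ ^ 2) / (1 - a) * ((y - Y) / ρ) ^ (1 - a) := by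
        rw [Real.div_rpow hρ.le hzY.le, Real.div_rpow (sub_nonneg.2 hy.1.le) hρ.le,
          Real.rpow_sub hρ, Real.rpow_one]
        field_simp

end HasBesselBound

end OneVariable

section Slices

variable {n : ℕ} {a : ℝ} {u : En n × ℝ → ℝ} {x x' : En n} {y B Q : ℝ} {s : Set ℝ}

theorem hasBesselBound_slice (hs : ∀ y ∈ s, IsAHarmonicAt a u (x, y))
    (hQ : ∀ y ∈ s, |∑ i, D2 u (x, y) (baseVec i)| ≤ Q) :
    HasBesselBound a Q (fun y ↦ u (x, y)) (fun y ↦ fderiv ℝ u (x, y) (0, 1))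
      (fun y ↦ D2 u (x, y) (0, 1)) s := by
  have hline (y : ℝ) : HasDerivAt (fun t : ℝ ↦ (x, t)) (0, 1) y :=
    (hasDerivAt_const y x).prodMk (hasDerivAt_id y)
  refine ⟨fun y hy ↦ ?_, fun y hy ↦ ?_, fun y hy ↦ ?_⟩
  · exact ((hs y hy).1.differentiableAt two_ne_zero).hasFDerivAt.comp_hasDerivAt y (hline y)
  · exact (hasFDerivAt_fderiv_apply (hs y hy).1 (0, 1)).comp_hasDerivAt y (hline y)
  · have hzero : ∑ i, D2 u (x, y) (baseVec i) + D2 u (x, y) (0, 1) +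
        a / y * fderiv ℝ u (x, y) (0, 1) = 0 := (hs y hy).2
    rw [show D2 u (x, y) (0, 1) + a / y * fderiv ℝ u (x, y) (0, 1) =
      -∑ i, D2 u (x, y) (baseVec i) by linarith, abs_neg]
    exact hQ y hy

theorem norm_le_of_norm_apply_single_le {F : Type*} [NormedAddCommGroup F] [NormedSpace ℝ F]
    {ℓ : En n →L[ℝ] F} (hB : 0 ≤ B) (hℓ : ∀ i, ‖ℓ (EuclideanSpace.single i 1)‖ ≤ B) :
    ‖ℓ‖ ≤ n * B := by
  refine ℓ.opNorm_le_bound (by positivity) fun z ↦ ?_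
  have hz : ℓ z = ∑ i, z i • ℓ (EuclideanSpace.single i 1) := by
    conv_lhs => rw [← (EuclideanSpace.basisFun (Fin n) ℝ).sum_repr z]
    simp
  calc ‖ℓ z‖ ≤ ∑ i, ‖z i • ℓ (EuclideanSpace.single i 1)‖ := hz ▸ norm_sum_le _ _
    _ ≤ ∑ _i : Fin n, ‖z‖ * B := Finset.sum_le_sum fun i _ ↦ by
        rw [norm_smul]
        exact mul_le_mul (PiLp.norm_apply_le z i) (hℓ i) (norm_nonneg _) (norm_nonneg z)
    _ = n * B * ‖z‖ := by
        rw [Finset.sum_const, Finset.card_univ, Fintype.card_fin, nsmul_eq_mul]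
        ring

theorem hasFDerivAt_slice {E F G : Type*} [NormedAddCommGroup E] [NormedSpace ℝ E]
    [NormedAddCommGroup F] [NormedSpace ℝ F] [NormedAddCommGroup G] [NormedSpace ℝ G]
    {u : E × F → G} {x : E} {y : F} (hu : DifferentiableAt ℝ u (x, y)) :
    HasFDerivAt (fun z ↦ u (z, y)) ((fderiv ℝ u (x, y)).comp (.inl ℝ E F)) x :=
  HasFDerivAt.comp (g := u) x hu.hasFDerivAt (hasFDerivAt_prodMk_left x y)

theorem abs_slice_sub_le {t : Set (En n)} (ht : Convex ℝ t)
    (hu : ∀ x ∈ t, DifferentiableAt ℝ u (x, y)) (hB0 : 0 ≤ B)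
    (hB : ∀ x ∈ t, ∀ i, |fderiv ℝ u (x, y) (baseVec i)| ≤ B) (hx : x ∈ t) (hx' : x' ∈ t) :
    |u (x, y) - u (x', y)| ≤ n * B * ‖x - x'‖ :=
  ht.norm_image_sub_le_of_norm_hasFDerivWithin_le (f := fun z ↦ u (z, y))
    (fun z hz ↦ (hasFDerivAt_slice (hu z hz)).hasFDerivWithinAt)
    (fun z hz ↦ norm_le_of_norm_apply_single_le hB0 (hB z hz)) hx' hx

end Slices

section Oscillation

namespace IsC11Extension

variable {n : ℕ} {a : ℝ} {u : En n × ℝ → ℝ} {f' : En n → En n →L[ℝ] ℝ} {X : En n × ℝ}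
  {ρ M M₁ M₂ : ℝ}

theorem add_bounds_nonneg (hu : IsC11Extension a u f' X ρ M₁ M₂) (hρ : 0 ≤ ρ) (hX : 0 ≤ X.2)
    (hM : ∀ q ∈ closedHalfCyl X ρ, |u q| ≤ M) : 0 ≤ M + M₁ + M₂ :=
  add_nonneg (add_nonneg ((abs_nonneg _).trans (hM X ⟨Metric.mem_closedBall_self hρ, hX⟩))
    (hu.norm_bound_nonneg hρ)) hu.lipschitz_nonneg

theorem abs_fderiv_baseVec_le_div (ha0 : 0 ≤ a) (ha1 : a ≤ 1)
    (hu : IsC11Extension a u f' X ρ M₁ M₂) (hX : 0 < X.2)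
    (hM : ∀ q ∈ closedHalfCyl X ρ, |u q| ≤ M) (hρ : 0 < ρ) (hρ1 : ρ ≤ 1) (j : Fin n) :
    |fderiv ℝ u X (baseVec j)| ≤ (n + 3) * (M + M₁ + M₂) / ρ := by
  have hM₁ : 0 ≤ M₁ := hu.norm_bound_nonneg hρ.le
  have hM₂ : 0 ≤ M₂ := hu.lipschitz_nonneg
  refine (hu.abs_fderiv_baseVec_le ha0 ha1 hX hM hρ j).trans ?_
  rw [le_div_iff₀ hρ, add_mul, div_mul_cancel₀ _ hρ.ne']
  have hM₁ρ : M₁ * ρ ≤ M₁ := mul_le_of_le_one_right hM₁ hρ1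
  nlinarith [mul_nonneg (Nat.cast_nonneg (α := ℝ) n) (add_nonneg hM₁ hM₂)]

theorem abs_fderiv_fderiv_baseVec_le_div (ha0 : 0 ≤ a) (ha1 : a ≤ 1)
    (hu : IsC11Extension a u f' X (2 * ρ) M₁ M₂) (hX : 0 < X.2)
    (hM : ∀ q ∈ closedHalfCyl X (2 * ρ), |u q| ≤ M) (hρ : 0 < ρ) (hρ1 : ρ ≤ 1) (i j : Fin n) :
    |fderiv ℝ (fun q ↦ fderiv ℝ u q (baseVec j)) X (baseVec i)| ≤
      (n + 3) ^ 2 * (M + M₁ + M₂) / ρ ^ 2 := by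
  have hM₁ : 0 ≤ M₁ := hu.norm_bound_nonneg (by linarith)
  have hM₂ : 0 ≤ M₂ := hu.lipschitz_nonneg
  have hn : (0 : ℝ) ≤ n := n.cast_nonneg
  have hM₁ρ : M₁ * ρ ≤ M₁ := mul_le_of_le_one_right hM₁ hρ1
  have hM₂ρ : M₂ * ρ ^ 2 ≤ M₂ := mul_le_of_le_one_right hM₂ (pow_le_one₀ hρ.le hρ1)
  refine (hu.abs_fderiv_fderiv_baseVec_le ha0 ha1 hX hM hρ i j).trans ?_
  rw [le_div_iff₀ (pow_pos hρ 2)]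
  calc ((n + 3) / ρ * ((n + 3) * M / ρ + M₁) + M₂) * ρ ^ 2
      = (n + 3) ^ 2 * M + (n + 3) * (M₁ * ρ) + M₂ * ρ ^ 2 := by field_simp
    _ ≤ (n + 3) ^ 2 * M + (n + 3) ^ 2 * M₁ + (n + 3) ^ 2 * M₂ :=
        add_le_add_three le_rfl
          (mul_le_mul (by nlinarith [hn]) hM₁ρ (by positivity) (by positivity))
          (hM₂ρ.trans (le_mul_of_one_le_left hM₂ (by nlinarith [hn])))
    _ = (n + 3) ^ 2 * (M + M₁ + M₂) := by ring

theorem abs_sum_D2_baseVec_le (ha0 : 0 ≤ a) (ha1 : a ≤ 1)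
    (hu : IsC11Extension a u f' X (2 * ρ) M₁ M₂) (hX : 0 < X.2)
    (hM : ∀ q ∈ closedHalfCyl X (2 * ρ), |u q| ≤ M) (hρ : 0 < ρ) (hρ1 : ρ ≤ 1) :
    |∑ i, D2 u X (baseVec i)| ≤ n * (n + 3) ^ 2 * (M + M₁ + M₂) / ρ ^ 2 := by
  refine (Finset.abs_sum_le_sum_abs _ _).trans ((Finset.sum_le_card_nsmul _ _ _ fun i _ ↦
    hu.abs_fderiv_fderiv_baseVec_le_div ha0 ha1 hX hM hρ hρ1 i i).trans_eq ?_)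
  rw [Finset.card_univ, Fintype.card_fin, nsmul_eq_mul]
  ring

theorem abs_sub_le_of_same_height (ha0 : 0 ≤ a) (ha1 : a ≤ 1)
    (hu : IsC11Extension a u f' X (2 * ρ) M₁ M₂) (hX : 0 < X.2)
    (hM : ∀ q ∈ closedHalfCyl X (2 * ρ), |u q| ≤ M) (hρ : 0 < ρ) (hρ1 : ρ ≤ 1) {x : En n}
    (hx : x ∈ Metric.closedBall X.1 ρ) :
    |u (x, X.2) - u X| ≤ n * (n + 3) * (M + M₁ + M₂) / ρ * ‖x - X.1‖ := by
  have hmono {z : En n} (hz : z ∈ Metric.closedBall X.1 ρ) : ρ + dist (z, X.2) X ≤ 2 * ρ := by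
    have : dist (z, X.2) X ≤ ρ := by
      rw [Prod.dist_eq, dist_self]
      exact max_le hz hρ.le
    linarith
  have hN : 0 ≤ M + M₁ + M₂ := hu.add_bounds_nonneg (by positivity) hX.le hM
  refine (abs_slice_sub_le (B := (n + 3) * (M + M₁ + M₂) / ρ) (convex_closedBall X.1 ρ)
    (fun z hz ↦ ?_) (by positivity) (fun z hz i ↦ ?_) hx
    (Metric.mem_closedBall_self hρ.le)).trans_eq (by ring)
  · exact ((hu.mono (hmono hz)).harmonic _ ⟨Metric.mem_ball_self hρ, hX⟩).1.differentiableAt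
      two_ne_zero
  · exact (hu.mono (hmono hz)).abs_fderiv_baseVec_le_div ha0 ha1 hX
      (fun q hq ↦ hM q ⟨Metric.closedBall_subset_closedBall' (hmono hz) hq.1, hq.2⟩) hρ hρ1 i

theorem abs_sub_le_of_same_base (ha0 : 0 ≤ a) (ha1 : a < 1)
    (hu : IsC11Extension a u f' X (3 * ρ) M₁ M₂) (hX : 0 < X.2)
    (hM : ∀ q ∈ closedHalfCyl X (3 * ρ), |u q| ≤ M) (hρ1 : ρ ≤ 1) {x : En n} {y : ℝ}
    (hx : x ∈ Metric.closedBall X.1 ρ) (hy : y ∈ Ioo X.2 (X.2 + ρ)) :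
    |u (x, y) - u (x, X.2)| ≤
      (2 + n * (n + 3) ^ 2) * (M + M₁ + M₂) / (1 - a) * ((y - X.2) / ρ) ^ (1 - a) := by
  have hρ : 0 < ρ := by linarith [hy.1, hy.2]
  have hdist {t : ℝ} (ht : t ∈ Icc X.2 (X.2 + ρ)) : dist (x, t) X ≤ ρ := by
    refine max_le hx ?_
    rw [Real.dist_eq, abs_of_nonneg (sub_nonneg.2 ht.1)]
    linarith [ht.2]
  have hmono {t : ℝ} (ht : t ∈ Icc X.2 (X.2 + ρ)) : 2 * ρ + dist (x, t) X ≤ 3 * ρ := by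
    linarith [hdist ht]
  have hmem {t : ℝ} (ht : t ∈ Icc X.2 (X.2 + ρ)) : (x, t) ∈ closedHalfCyl X (3 * ρ) :=
    ⟨(hdist ht).trans (by linarith), hX.le.trans ht.1⟩
  have hbessel := hasBesselBound_slice (a := a) (u := u) (x := x) (s := Ioo X.2 (X.2 + ρ))
    (Q := n * (n + 3) ^ 2 * (M + M₁ + M₂) / ρ ^ 2)
    (fun t ht ↦ hu.harmonic _
      ⟨(hdist (Ioo_subset_Icc_self ht)).trans_lt (by linarith), hX.trans ht.1⟩)
    (fun t ht ↦ (hu.mono (hmono (Ioo_subset_Icc_self ht))).abs_sum_D2_baseVec_le ha0 ha1.le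
      (hX.trans ht.1) (fun q hq ↦ hM q ⟨Metric.closedBall_subset_closedBall'
        (hmono (Ioo_subset_Icc_self ht)) hq.1, hq.2⟩) hρ hρ1)
  have hM₁ : 0 ≤ M₁ := hu.norm_bound_nonneg (by linarith)
  have hM₂ : 0 ≤ M₂ := hu.lipschitz_nonneg
  refine (hbessel.abs_sub_le ha0 ha1 hX.le
    (hu.continuousOn.comp (by fun_prop) fun t ht ↦ hmem ht) (fun t ht ↦ hM _ (hmem ht)) hy).trans ?_
  rw [div_mul_cancel₀ _ (pow_ne_zero 2 hρ.ne')]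
  have : 0 < 1 - a := sub_pos.2 ha1
  have : 0 ≤ (y - X.2) / ρ := div_nonneg (sub_nonneg.2 hy.1.le) hρ.le
  gcongr
  linarith

theorem oscillation_le (ha0 : 0 ≤ a) (ha1 : a < 1)
    (hu : IsC11Extension a u f' X (3 * ρ) M₁ M₂) (hX : 0 < X.2)
    (hM : ∀ q ∈ closedHalfCyl X (3 * ρ), |u q| ≤ M) (hρ : 0 < ρ) (hρ1 : ρ ≤ 1) {ε : ℝ}
    (hε1 : ε ≤ 1) {p : En n × ℝ} (hp : p.1 ∈ Metric.closedBall X.1 (ε * ρ))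
    (hpy : p.2 ∈ Ioo X.2 (X.2 + ε * ρ)) :
    |u p - u X| ≤ (n * (n + 3) + (2 + n * (n + 3) ^ 2) / (1 - a)) * (M + M₁ + M₂) *
      ε ^ (1 - a) := by
  have : 0 < 1 - a := sub_pos.2 ha1
  have hε : 0 < ε := pos_of_mul_pos_left (by linarith [hpy.1, hpy.2] : 0 < ε * ρ) hρ.le
  have hερ : ε * ρ ≤ ρ := mul_le_of_le_one_left hρ.le hε1
  have hmono : 2 * ρ + dist X X ≤ 3 * ρ := by rw [dist_self]; linarith
  have hp' : p.1 ∈ Metric.closedBall X.1 ρ := Metric.closedBall_subset_closedBall hερ hp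
  have hM' : ∀ q ∈ closedHalfCyl X (2 * ρ), |u q| ≤ M := fun q hq ↦
    hM q ⟨Metric.closedBall_subset_closedBall (by linarith) hq.1, hq.2⟩
  have hN : 0 ≤ M + M₁ + M₂ := hu.add_bounds_nonneg (by positivity) hX.le hM
  have hhorizontal : |u (p.1, X.2) - u X| ≤ n * (n + 3) * (M + M₁ + M₂) * ε ^ (1 - a) := by
    refine ((hu.mono hmono).abs_sub_le_of_same_height ha0 ha1.le hX hM' hρ hρ1 hp').trans ?_
    have hdist : ‖p.1 - X.1‖ / ρ ≤ ε := by
      rw [div_le_iff₀ hρ, ← dist_eq_norm]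
      exact hp
    rw [div_mul_eq_mul_div, mul_div_assoc]
    gcongr
    exact hdist.trans (Real.self_le_rpow_of_le_one hε.le hε1 (by linarith))
  have hvertical : |u p - u (p.1, X.2)| ≤
      (2 + n * (n + 3) ^ 2) * (M + M₁ + M₂) / (1 - a) * ε ^ (1 - a) := by
    refine (hu.abs_sub_le_of_same_base ha0 ha1 hX hM hρ1 hp'
      ⟨hpy.1, by linarith [hpy.2]⟩).trans ?_
    have hratio : (p.2 - X.2) / ρ ≤ ε := by
      rw [div_le_iff₀ hρ]
      linarith [hpy.2]
    have hratio0 : 0 ≤ (p.2 - X.2) / ρ := div_nonneg (sub_nonneg.2 hpy.1.le) hρ.le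
    gcongr
  refine (abs_sub_le _ (u (p.1, X.2)) _).trans ((add_le_add hvertical hhorizontal).trans_eq ?_)
  ring

end IsC11Extension

end Oscillation

section SupBound

theorem exists_isMaxOn_weighted {E : Type*} [NormedAddCommGroup E] {K : Set E} {u : E → ℝ}
    {R : ℝ} (hK : IsCompact K) (hne : K.Nonempty) (hKR : ∀ p ∈ K, ‖p‖ ≤ R)
    (hu : ContinuousOn u K) (k : ℕ) :
    ∃ X ∈ K, (∀ p ∈ K, (R - ‖p‖) ^ k * |u p| ≤ (R - ‖X‖) ^ k * |u X|) ∧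
      ∀ p ∈ K, dist p X ≤ (R - ‖X‖) / 2 → |u p| ≤ 2 ^ k * |u X| := by
  obtain ⟨X, hX, hmax⟩ := hK.exists_isMaxOn hne
    (f := fun p ↦ (R - ‖p‖) ^ k * |u p|) (by fun_prop)
  refine ⟨X, hX, hmax, fun p hp hpX ↦ ?_⟩
  obtain hd | hd := (sub_nonneg.2 (hKR X hX)).eq_or_lt
  · rw [dist_le_zero.1 (hpX.trans_eq (by rw [← hd, zero_div]))]
    exact le_mul_of_one_le_left (abs_nonneg _) (one_le_pow₀ one_le_two)
  · have hnorm : (R - ‖X‖) / 2 ≤ R - ‖p‖ := by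
      have hXp := norm_le_norm_add_norm_sub X p
      rw [← dist_eq_norm, dist_comm] at hXp
      linarith
    have hle : ((R - ‖X‖) / 2) ^ k * |u p| ≤ (R - ‖X‖) ^ k * |u X| :=
      (mul_le_mul_of_nonneg_right (pow_le_pow_left₀ (half_pos hd).le hnorm k)
        (abs_nonneg _)).trans (hmax hp)
    rw [div_pow, div_mul_eq_mul_div, div_le_iff₀ (by positivity), mul_assoc] at hle
    exact (le_of_mul_le_mul_left hle (pow_pos hd k)).trans_eq (mul_comm _ _)

/-- The upper half of the product ball of radius `r` around `X`, kept at height at least `r / 2`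
above `X` so that the weight `y ^ a` is bounded below on it. -/
def upperBox {n : ℕ} (X : En n × ℝ) (r : ℝ) : Set (En n × ℝ) :=
  Metric.ball X.1 r ×ˢ Ioo (X.2 + r / 2) (X.2 + r)

variable {n : ℕ} {a : ℝ} {u : En n × ℝ → ℝ} {X : En n × ℝ} {r : ℝ}

theorem setIntegral_weighted_sq_mono {Ω Ω' : Set (En n × ℝ)} (hΩ : MeasurableSet Ω)
    (hpos : ∀ p ∈ Ω, 0 < p.2) (hI : IntegrableOn (fun p ↦ p.2 ^ a * u p ^ 2) Ω) (hsub : Ω' ⊆ Ω) :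
    ∫ p in Ω', p.2 ^ a * u p ^ 2 ≤ ∫ p in Ω, p.2 ^ a * u p ^ 2 := by
  refine setIntegral_mono_set hI ?_ (.of_forall hsub)
  refine (ae_restrict_iff' hΩ).2 (.of_forall fun p hp ↦ ?_)
  exact mul_nonneg (Real.rpow_nonneg (hpos p hp).le a) (sq_nonneg _)

theorem volume_upperBox (hr : 0 < r) :
    volume.real (upperBox X r) = r ^ (n + 1) / 2 * volume.real (Metric.ball (0 : En n) 1) := by
  rw [upperBox, Measure.volume_eq_prod, measureReal_prod_prod, Real.volume_real_Ioo_of_le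
    (by linarith), Measure.real, Measure.addHaar_ball_of_pos _ _ hr, ENNReal.toReal_mul,
    ENNReal.toReal_ofReal (by positivity), finrank_euclideanSpace_fin, ← Measure.real]
  ring

theorem mul_volume_upperBox_le_integral (ha1 : a ≤ 1) (hX : 0 ≤ X.2)
    (hXr : X.2 + r ≤ 1) {Ω : Set (En n × ℝ)} (hΩ : MeasurableSet Ω)
    (hpos : ∀ p ∈ Ω, 0 < p.2) (hsub : upperBox X r ⊆ Ω)
    (hI : IntegrableOn (fun p ↦ p.2 ^ a * u p ^ 2) Ω) {m : ℝ} (hm0 : 0 ≤ m)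
    (hm : ∀ p ∈ upperBox X r, m ≤ |u p|) :
    r / 2 * m ^ 2 * volume.real (upperBox X r) ≤ ∫ p in Ω, p.2 ^ a * u p ^ 2 := by
  have hmeas : MeasurableSet (upperBox X r) := measurableSet_ball.prod measurableSet_Ioo
  have hfin : volume (upperBox X r) ≠ ⊤ := by
    rw [upperBox, Measure.volume_eq_prod, Measure.prod_prod]
    exact ENNReal.mul_ne_top measure_ball_lt_top.ne measure_Ioo_lt_top.ne
  have hlower : ∀ p ∈ upperBox X r, r / 2 * m ^ 2 ≤ p.2 ^ a * u p ^ 2 := fun p hp ↦ by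
    have hp0 : 0 < p.2 := hpos p (hsub hp)
    have hweight : r / 2 ≤ p.2 ^ a :=
      (by linarith [hp.2.1] : r / 2 ≤ p.2).trans
        (Real.self_le_rpow_of_le_one hp0.le (by linarith [hp.2.2]) ha1)
    rw [← sq_abs (u p)]
    gcongr
    exact hm p hp
  exact (setIntegral_ge_of_const_le_real hmeas hfin hlower (hI.mono_set hsub)).trans
    (setIntegral_weighted_sq_mono hΩ hpos hI hsub)

theorem exists_mul_rpow_le_half {C b : ℝ} (hb : 0 < b) :
    ∃ ε ∈ Ioc (0 : ℝ) 1, C * ε ^ b ≤ 1 / 2 := by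
  have hlim : Tendsto (fun ε : ℝ ↦ C * ε ^ b) (𝓝[>] 0) (𝓝 0) := by
    have hcont := ((Real.continuous_rpow_const hb.le).const_mul C).tendsto 0
    simp only [Real.zero_rpow hb.ne', mul_zero] at hcont
    exact hcont.mono_left nhdsWithin_le_nhds
  obtain ⟨ε, hε, hεb⟩ := ((hlim.eventually_le_const one_half_pos).and
    (Ioc_mem_nhdsGT one_pos)).exists
  exact ⟨ε, hεb, hε⟩

namespace IsC11Extension

variable {f' : En n → En n →L[ℝ] ℝ} {M₁ M₂ : ℝ}

theorem mul_sq_le_integral (ha0 : 0 ≤ a) (ha1 : a < 1) {ρ : ℝ}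
    (hu : IsC11Extension a u f' X (3 * ρ) M₁ M₂) (hX : 0 < X.2) (hρ : 0 < ρ) (hXρ : X.2 + ρ ≤ 1)
    (hI : IntegrableOn (fun p ↦ p.2 ^ a * u p ^ 2) (halfCyl X (3 * ρ)))
    {K ε : ℝ} (hM : ∀ q ∈ closedHalfCyl X (3 * ρ), |u q| ≤ K * |u X|) (hM₁₂ : M₁ + M₂ ≤ |u X|)
    (hε0 : 0 < ε) (hε1 : ε ≤ 1)
    (hε : (n * (n + 3) + (2 + n * (n + 3) ^ 2) / (1 - a)) * (K + 1) * ε ^ (1 - a) ≤ 1 / 2) :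
    (ε * ρ) ^ (n + 2) * volume.real (Metric.ball (0 : En n) 1) / 16 * |u X| ^ 2 ≤
      ∫ p in halfCyl X (3 * ρ), p.2 ^ a * u p ^ 2 := by
  have hερ : ε * ρ ≤ ρ := mul_le_of_le_one_left hρ.le hε1
  have : 0 < 1 - a := sub_pos.2 ha1
  have hbox : ∀ p ∈ upperBox X (ε * ρ),
      p.1 ∈ Metric.ball X.1 (ε * ρ) ∧ p.2 ∈ Ioo X.2 (X.2 + ε * ρ) := fun p hp ↦
    ⟨hp.1, by linarith [hp.2.1, mul_pos hε0 hρ], hp.2.2⟩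
  have hsub : upperBox X (ε * ρ) ⊆ halfCyl X (3 * ρ) := fun p hp ↦ by
    obtain ⟨hp₁, hp₂⟩ := hbox p hp
    refine ⟨max_lt ((show dist p.1 X.1 < ε * ρ from hp₁).trans_le (by linarith)) ?_,
      hX.trans hp₂.1⟩
    rw [Real.dist_eq, abs_of_pos (sub_pos.2 hp₂.1)]
    linarith [hp₂.2]
  have hlower : ∀ p ∈ upperBox X (ε * ρ), |u X| / 2 ≤ |u p| := fun p hp ↦ by
    obtain ⟨hp₁, hp₂⟩ := hbox p hp
    have hosc : |u p - u X| ≤ |u X| / 2 :=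
      calc |u p - u X|
          ≤ (n * (n + 3) + (2 + n * (n + 3) ^ 2) / (1 - a)) * (K * |u X| + M₁ + M₂) *
              ε ^ (1 - a) :=
            hu.oscillation_le ha0 ha1 hX hM hρ (by linarith) hε1
              (Metric.ball_subset_closedBall hp₁) hp₂
        _ ≤ (n * (n + 3) + (2 + n * (n + 3) ^ 2) / (1 - a)) * ((K + 1) * |u X|) * ε ^ (1 - a) := by
            gcongr
            linarith
        _ = (n * (n + 3) + (2 + n * (n + 3) ^ 2) / (1 - a)) * (K + 1) * ε ^ (1 - a) * |u X| := by
            ring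
        _ ≤ |u X| / 2 := by linarith [mul_le_mul_of_nonneg_right hε (abs_nonneg (u X))]
    linarith [abs_sub_abs_le_abs_sub (u X) (u p), abs_sub_comm (u X) (u p)]
  refine Eq.trans_le ?_ (mul_volume_upperBox_le_integral ha1.le hX.le (by linarith)
    isOpen_halfCyl.measurableSet (fun p hp ↦ hp.2) hsub hI (by positivity) hlower)
  rw [volume_upperBox (mul_pos hε0 hρ)]
  ring

theorem exists_pow_mul_abs_le_of_doubling (n : ℕ) (ha0 : 0 ≤ a) (ha1 : a < 1) :
    ∃ C > 0, ∀ (u : En n × ℝ → ℝ) (f' : En n → En n →L[ℝ] ℝ) (X : En n × ℝ) (d M₁ M₂ J : ℝ),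
      IsC11Extension a u f' X (d / 2) M₁ M₂ → 0 < X.2 → 0 < d → X.2 + d ≤ 1 →
      (∀ q ∈ closedHalfCyl X (d / 2), |u q| ≤ 2 ^ (n + 2) * |u X|) → M₁ + M₂ ≤ |u X| →
      IntegrableOn (fun p ↦ p.2 ^ a * u p ^ 2) (halfCyl X (d / 2)) → 0 ≤ J →
      ∫ p in halfCyl X (d / 2), p.2 ^ a * u p ^ 2 ≤ J ^ 2 → d ^ (n + 2) * |u X| ≤ C * J := by
  obtain ⟨ε, ⟨hε0, hε1⟩, hε⟩ := exists_mul_rpow_le_half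
    (C := (n * (n + 3) + (2 + n * (n + 3) ^ 2) / (1 - a)) * (2 ^ (n + 2) + 1)) (sub_pos.2 ha1)
  set c : ℝ := (ε / 6) ^ (n + 2) * volume.real (Metric.ball (0 : En n) 1) / 16
  have hc : 0 < c := by
    have : 0 < volume.real (Metric.ball (0 : En n) 1) :=
      ENNReal.toReal_pos (Metric.measure_ball_pos _ _ one_pos).ne' measure_ball_lt_top.ne
    positivity
  refine ⟨(√c)⁻¹, by positivity, fun u f' X d M₁ M₂ J hu hX hd hXd hmax hM₁₂ hI hJ0 hJ ↦ ?_⟩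
  rw [show d / 2 = 3 * (d / 6) by ring] at hu hmax hI hJ
  have hmass := hu.mul_sq_le_integral ha0 ha1 hX (by positivity) (by linarith) hI hmax hM₁₂
    hε0 hε1 hε
  have hpow : d ^ (n + 2) ≤ 1 := pow_le_one₀ hd.le (by linarith)
  have hsq : (√c * (d ^ (n + 2) * |u X|)) ^ 2 ≤ J ^ 2 :=
    calc (√c * (d ^ (n + 2) * |u X|)) ^ 2 = d ^ (n + 2) * (c * d ^ (n + 2) * |u X| ^ 2) := by
          rw [mul_pow, Real.sq_sqrt hc.le]
          ring
      _ ≤ c * d ^ (n + 2) * |u X| ^ 2 := mul_le_of_le_one_left (by positivity) hpow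
      _ = (ε * (d / 6)) ^ (n + 2) * volume.real (Metric.ball (0 : En n) 1) / 16 * |u X| ^ 2 := by
          rw [show ε * (d / 6) = ε / 6 * d by ring, mul_pow]
          ring
      _ ≤ J ^ 2 := hmass.trans hJ
  rw [inv_mul_eq_div, le_div_iff₀' (Real.sqrt_pos.2 hc)]
  exact (le_abs_self _).trans (abs_le_of_sq_le_sq hsq hJ0)

theorem exists_weighted_sup_bound (n : ℕ) (ha0 : 0 ≤ a) (ha1 : a < 1) :
    ∃ C > 0, ∀ (u : En n × ℝ → ℝ) (f' : En n → En n →L[ℝ] ℝ) (R M₀ M₁ M₂ J : ℝ), R ≤ 1 →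
      IsC11Extension a u f' 0 R M₁ M₂ → (∀ x ∈ Metric.closedBall 0 R, |u (x, 0)| ≤ M₀) →
      IntegrableOn (fun p ↦ p.2 ^ a * u p ^ 2) (halfCyl 0 R) → 0 ≤ J →
      ∫ p in halfCyl 0 R, p.2 ^ a * u p ^ 2 ≤ J ^ 2 →
      ∀ p ∈ closedHalfCyl 0 R, (R - ‖p‖) ^ (n + 2) * |u p| ≤ C * (M₀ + M₁ + M₂ + J) := by
  obtain ⟨C, hC, hbound⟩ := exists_pow_mul_abs_le_of_doubling (a := a) n ha0 ha1
  refine ⟨1 + C, by positivity, fun u f' R M₀ M₁ M₂ J hR1 hu hM₀ hI hJ0 hJ p hp ↦ ?_⟩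
  have hR {q : En n × ℝ} (hq : q ∈ closedHalfCyl 0 R) : ‖q‖ ≤ R := mem_closedBall_zero_iff.1 hq.1
  have hR0 : 0 ≤ R := (norm_nonneg p).trans (hR hp)
  have hM₀0 : 0 ≤ M₀ := (abs_nonneg _).trans (hM₀ 0 (Metric.mem_closedBall_self hR0))
  have hM₁ : 0 ≤ M₁ := hu.norm_bound_nonneg hR0
  have hM₂ : 0 ≤ M₂ := hu.lipschitz_nonneg
  obtain ⟨X, hX, hmax, hdouble⟩ := exists_isMaxOn_weighted isCompact_closedHalfCyl ⟨p, hp⟩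
    (fun q hq ↦ hR hq) hu.continuousOn (n + 2)
  have hCS : 0 ≤ C * (M₀ + M₁ + M₂ + J) := by positivity
  refine (hmax p hp).trans ?_
  have hd0 : 0 ≤ R - ‖X‖ := sub_nonneg.2 (hR hX)
  have hsmall (hle : |u X| ≤ M₀ + M₁ + M₂) :
      (R - ‖X‖) ^ (n + 2) * |u X| ≤ (1 + C) * (M₀ + M₁ + M₂ + J) :=
    (mul_le_of_le_one_left (abs_nonneg _)
      (pow_le_one₀ hd0 (by linarith [norm_nonneg X]))).trans (by linarith)
  obtain hd | hd := hd0.eq_or_lt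
  · rw [← hd, zero_pow (by positivity), zero_mul]
    positivity
  obtain hX0 | hX0 := (show 0 ≤ X.2 from hX.2).eq_or_lt
  · have htrace := hM₀ X.1 (mem_closedBall_zero_iff.2 ((norm_fst_le X).trans (hR hX)))
    rw [hX0] at htrace
    exact hsmall (htrace.trans (by linarith))
  obtain hle | hge := le_total |u X| (M₁ + M₂)
  · exact hsmall (hle.trans (by linarith))
  have hmono : (R - ‖X‖) / 2 + dist X 0 ≤ R := by rw [dist_zero_right]; linarith
  have hsub : halfCyl X ((R - ‖X‖) / 2) ⊆ halfCyl 0 R :=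
    inter_subset_inter_left _ (Metric.ball_subset_ball' hmono)
  have hXd : X.2 + (R - ‖X‖) ≤ 1 := by linarith [(le_abs_self X.2).trans (norm_snd_le X)]
  have hXmax : ∀ q ∈ closedHalfCyl X ((R - ‖X‖) / 2), |u q| ≤ 2 ^ (n + 2) * |u X| :=
    fun q hq ↦ hdouble q ⟨Metric.closedBall_subset_closedBall' hmono hq.1, hq.2⟩ hq.1
  have hJX := (setIntegral_weighted_sq_mono isOpen_halfCyl.measurableSet (fun q hq ↦ hq.2) hI
    hsub).trans hJ
  refine (hbound u f' X (R - ‖X‖) M₁ M₂ J (hu.mono hmono) hX0 hd hXd hXmax hge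
    (hI.mono_set hsub) hJ0 hJX).trans ?_
  linarith [mul_nonneg hC.le (add_nonneg (add_nonneg hM₀0 hM₁) hM₂)]

end IsC11Extension

end SupBound

section ScaleApprox

variable {E F : Type*} [NormedAddCommGroup E] [NormedSpace ℝ E] [NormedAddCommGroup F]
  [NormedSpace ℝ F]

theorem norm_fderiv_le_of_norm_le {ψ : E → F} {ψ' : E → E →L[ℝ] F} {e L h : ℝ} {x : E}
    (hh : 0 < h) (hL : 0 ≤ L) (hψ : ∀ z ∈ Metric.closedBall x h, HasFDerivAt ψ (ψ' z) z)
    (he : ∀ z ∈ Metric.closedBall x h, ‖ψ z‖ ≤ e)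
    (hψ' : ∀ z ∈ Metric.closedBall x h, ‖ψ' z - ψ' x‖ ≤ L * ‖z - x‖) :
    ‖ψ' x‖ ≤ 2 * e / h + L * h := by
  have hx : x ∈ Metric.closedBall x h := Metric.mem_closedBall_self hh.le
  have he0 : 0 ≤ e := (norm_nonneg _).trans (he x hx)
  refine ContinuousLinearMap.opNorm_le_of_unit_norm (by positivity) fun v hv ↦ ?_
  have hxv : x + h • v ∈ Metric.closedBall x h := by
    rw [mem_closedBall_iff_norm, add_sub_cancel_left, norm_smul, hv, mul_one,
      Real.norm_of_nonneg hh.le]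
  have htaylor := (convex_closedBall x h).norm_image_sub_le_of_norm_hasFDerivWithin_le'
    (fun z hz ↦ (hψ z hz).hasFDerivWithinAt) (fun z hz ↦ (hψ' z hz).trans
      (mul_le_mul_of_nonneg_left (mem_closedBall_iff_norm.1 hz) hL)) hx hxv
  rw [add_sub_cancel_left, norm_smul, hv, mul_one, Real.norm_of_nonneg hh.le, map_smul]
    at htaylor
  have hscaled : h * ‖ψ' x v‖ ≤ 2 * e + L * h * h :=
    calc h * ‖ψ' x v‖ = ‖h • ψ' x v‖ := by rw [norm_smul, Real.norm_of_nonneg hh.le]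
      _ ≤ ‖ψ (x + h • v) - ψ x‖ + ‖ψ (x + h • v) - ψ x - h • ψ' x v‖ :=
          norm_le_norm_add_norm_sub _ _
      _ ≤ e + e + L * h * h :=
          add_le_add ((norm_sub_le _ _).trans (add_le_add (he _ hxv) (he x hx))) htaylor
      _ = 2 * e + L * h * h := by ring
  rw [show 2 * e / h + L * h = (2 * e + L * h * h) / h by field_simp]
  exact (le_div_iff₀' hh).2 hscaled

/-- A family `φ y`, `0 < y ≤ δ`, of differentiable approximations of `g` on `U` with derivatives
`φ' y`, such that `φ y` is `K * y ^ (1 + a)`-close to `g` and `φ' y` has Lipschitz constant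
`K * y ^ (a - 1)`. Its existence forces `g` to be `C^{1,a}` inside `U`. -/
structure IsScaleApprox (a K δ : ℝ) (g : E → F) (φ : ℝ → E → F) (φ' : ℝ → E → E →L[ℝ] F)
    (U : Set E) : Prop where
  hasFDerivAt : ∀ y ∈ Ioc 0 δ, ∀ x ∈ U, HasFDerivAt (φ y) (φ' y x) x
  norm_error_le : ∀ y ∈ Ioc 0 δ, ∀ x ∈ U, ‖g x - φ y x‖ ≤ K * y ^ (1 + a)
  lipschitz : ∀ y ∈ Ioc 0 δ, ∀ x ∈ U, ∀ x' ∈ U, ‖φ' y x - φ' y x'‖ ≤ K * y ^ (a - 1) * ‖x - x'‖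

namespace IsScaleApprox

variable {a K δ c y : ℝ} {g : E → F} {φ : ℝ → E → F} {φ' : ℝ → E → E →L[ℝ] F} {U s : Set E}
  {x x' : E}

theorem nonneg (hφ : IsScaleApprox a K δ g φ φ' U) (hy : y ∈ Ioc 0 δ) (hx : x ∈ U) : 0 ≤ K :=
  nonneg_of_mul_nonneg_left ((norm_nonneg _).trans (hφ.norm_error_le y hy x hx))
    (Real.rpow_pos_of_pos hy.1 _)

theorem norm_fderiv_sub_half_le (ha : 0 ≤ a) (hφ : IsScaleApprox a K δ g φ φ' U)
    (hy : y ∈ Ioc 0 δ) (hxU : Metric.closedBall x y ⊆ U) :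
    ‖φ' y x - φ' (y / 2) x‖ ≤ 7 * K * y ^ a := by
  have hy0 : 0 < y := hy.1
  have hy2 : y / 2 ∈ Ioc 0 δ := ⟨half_pos hy0, (half_le_self hy0.le).trans hy.2⟩
  have hx : x ∈ U := hxU (Metric.mem_closedBall_self hy0.le)
  have hK : 0 ≤ K := hφ.nonneg hy hx
  have hhalf : (y / 2) ^ (1 + a) ≤ y ^ (1 + a) :=
    Real.rpow_le_rpow hy2.1.le (half_le_self hy0.le) (by linarith)
  have hhalf' : (y / 2) ^ (a - 1) ≤ 2 * y ^ (a - 1) := by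
    rw [Real.rpow_sub_one hy2.1.ne', Real.rpow_sub_one hy0.ne', div_div_eq_mul_div,
      mul_comm _ (2 : ℝ), mul_div_assoc]
    gcongr
    exact half_le_self hy0.le
  have hclose : ∀ z ∈ Metric.closedBall x y, ‖φ y z - φ (y / 2) z‖ ≤ 2 * K * y ^ (1 + a) :=
    fun z hz ↦ by
      have hsum := add_le_add (hφ.norm_error_le y hy z (hxU hz))
        ((hφ.norm_error_le _ hy2 z (hxU hz)).trans (mul_le_mul_of_nonneg_left hhalf hK))
      rw [← sub_sub_sub_cancel_left (φ (y / 2) z) (φ y z) (g z)]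
      exact (norm_sub_le _ _).trans (by linarith)
  have hlip : ∀ z ∈ Metric.closedBall x y, ‖φ' y z - φ' (y / 2) z - (φ' y x - φ' (y / 2) x)‖ ≤
      3 * K * y ^ (a - 1) * ‖z - x‖ := fun z hz ↦ by
    rw [sub_sub_sub_comm]
    calc _ ≤ K * y ^ (a - 1) * ‖z - x‖ + K * (2 * y ^ (a - 1)) * ‖z - x‖ := by
          refine (norm_sub_le _ _).trans (add_le_add (hφ.lipschitz y hy z (hxU hz) x hx)
            ((hφ.lipschitz _ hy2 z (hxU hz) x hx).trans ?_))
          gcongr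
      _ = 3 * K * y ^ (a - 1) * ‖z - x‖ := by ring
  refine (norm_fderiv_le_of_norm_le hy0 (by positivity) (fun z hz ↦
    (hφ.hasFDerivAt y hy z (hxU hz)).sub (hφ.hasFDerivAt _ hy2 z (hxU hz))) hclose
    hlip).trans_eq ?_
  rw [Real.rpow_add hy0, Real.rpow_one, Real.rpow_sub_one hy0.ne']
  field_simp
  ring

theorem dist_fderiv_le_geometric (ha : 0 ≤ a) (hφ : IsScaleApprox a K δ g φ φ' U)
    (hy : y ∈ Ioc 0 δ) (hxU : Metric.closedBall x δ ⊆ U) (k : ℕ) :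
    dist (φ' (y / 2 ^ k) x) (φ' (y / 2 ^ (k + 1)) x) ≤ 7 * K * y ^ a * ((1 / 2) ^ a) ^ k := by
  have hle : y / 2 ^ k ≤ δ := (div_le_self hy.1.le (one_le_pow₀ one_le_two)).trans hy.2
  have hpow : (y / 2 ^ k) ^ a = y ^ a * ((1 / 2) ^ a) ^ k := by
    rw [← one_div_mul_eq_div, ← one_div_pow, Real.mul_rpow (by positivity) hy.1.le,
      ← Real.rpow_natCast_mul (by norm_num), mul_comm, mul_comm (k : ℝ),
      Real.rpow_mul_natCast (by norm_num)]
  rw [dist_eq_norm, pow_succ, ← div_div, mul_assoc, ← hpow]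
  exact hφ.norm_fderiv_sub_half_le ha ⟨div_pos hy.1 (by positivity), hle⟩
    ((Metric.closedBall_subset_closedBall hle).trans hxU)

theorem tendsto_div_two_pow (ha : 0 ≤ a) (hφ : IsScaleApprox a K δ g φ φ' U)
    (hy : y ∈ Ioc 0 δ) (hx : x ∈ U) : Tendsto (fun k : ℕ ↦ φ (y / 2 ^ k) x) atTop (𝓝 (g x)) := by
  have hscale : Tendsto (fun k : ℕ ↦ y / 2 ^ k) atTop (𝓝 0) :=
    tendsto_const_nhds.div_atTop (tendsto_pow_atTop_atTop_of_one_lt one_lt_two)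
  have hbound : Tendsto (fun k : ℕ ↦ K * (y / 2 ^ k) ^ (1 + a)) atTop (𝓝 0) := by
    have hpow := (hscale.rpow_const (p := 1 + a) (Or.inr (by linarith))).const_mul K
    rwa [Real.zero_rpow (by linarith), mul_zero] at hpow
  refine tendsto_iff_norm_sub_tendsto_zero.2 (squeeze_zero (fun _ ↦ norm_nonneg _) (fun k ↦ ?_)
    hbound)
  rw [norm_sub_rev]
  exact hφ.norm_error_le _ ⟨div_pos hy.1 (by positivity),
    (div_le_self hy.1.le (one_le_pow₀ one_le_two)).trans hy.2⟩ x hx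

variable [CompleteSpace F]

theorem hasFDerivAt_fderiv_and_norm_sub_le (ha : 0 < a) (hφ : IsScaleApprox a K δ g φ φ' U)
    (hs : IsOpen s) (hsU : ∀ x ∈ s, Metric.closedBall x δ ⊆ U) (hy : y ∈ Ioc 0 δ) (hx : x ∈ s) :
    HasFDerivAt g (fderiv ℝ g x) x ∧
      ‖φ' y x - fderiv ℝ g x‖ ≤ 7 * K / (1 - (1 / 2) ^ a) * y ^ a := by
  set q : ℝ := (1 / 2) ^ a
  have hq0 : 0 ≤ q := by positivity
  have hq1 : q < 1 := Real.rpow_lt_one (by norm_num) (by norm_num) ha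
  have hgeom (z : E) (hz : z ∈ s) := hφ.dist_fderiv_le_geometric ha.le hy (hsU z hz)
  have hmemU (z : E) (hz : z ∈ s) : z ∈ U :=
    hsU z hz (Metric.mem_closedBall_self (hy.1.le.trans hy.2))
  choose! G hG using fun z hz ↦
    cauchySeq_tendsto_of_complete (cauchySeq_of_le_geometric q _ hq1 (hgeom z hz))
  have hunif : TendstoUniformlyOn (fun k : ℕ ↦ φ' (y / 2 ^ k)) G atTop s := by
    refine Metric.tendstoUniformlyOn_iff.2 fun e he ↦ ?_
    have htail : Tendsto (fun k : ℕ ↦ 7 * K * y ^ a * q ^ k / (1 - q)) atTop (𝓝 0) := by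
      simpa only [mul_zero, zero_div] using
        ((tendsto_pow_atTop_nhds_zero_of_lt_one hq0 hq1).const_mul _).div_const _
    filter_upwards [htail.eventually_lt_const he] with k hk z hz
    rw [dist_comm]
    exact (dist_le_of_le_geometric_of_tendsto q _ hq1 (hgeom z hz) (hG z hz) k).trans_lt hk
  have hderiv : HasFDerivAt g (G x) x := by
    refine hasFDerivAt_of_tendstoUniformlyOn hs hunif (fun k z hz ↦ hφ.hasFDerivAt _
      ⟨div_pos hy.1 (by positivity), ?_⟩ z (hmemU z hz))
      (fun z hz ↦ hφ.tendsto_div_two_pow ha.le hy (hmemU z hz)) hx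
    exact (div_le_self hy.1.le (one_le_pow₀ one_le_two)).trans hy.2
  have hdist := dist_le_of_le_geometric_of_tendsto₀ q _ hq1 (hgeom x hx) (hG x hx)
  rw [pow_zero, div_one, dist_eq_norm, mul_div_right_comm] at hdist
  rw [hderiv.fderiv]
  exact ⟨hderiv, hdist⟩

theorem norm_fderiv_sub_le (ha : 0 < a) (hφ : IsScaleApprox a K δ g φ φ' U) (hs : IsOpen s)
    (hsU : ∀ x ∈ s, Metric.closedBall x δ ⊆ U) (hc : 0 < c) (hx : x ∈ s) (hx' : x' ∈ s)
    (hxx' : c * ‖x - x'‖ ≤ δ) :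
    ‖fderiv ℝ g x - fderiv ℝ g x'‖ ≤
      (14 * K / (1 - (1 / 2) ^ a) + K / c) * c ^ a * ‖x - x'‖ ^ a := by
  obtain rfl | hne := eq_or_ne x x'
  · simp [Real.zero_rpow ha.ne']
  have hd : 0 < ‖x - x'‖ := norm_sub_pos_iff.2 hne
  have hy : c * ‖x - x'‖ ∈ Ioc 0 δ := ⟨mul_pos hc hd, hxx'⟩
  have hmemU (z : E) (hz : z ∈ s) : z ∈ U :=
    hsU z hz (Metric.mem_closedBall_self (hy.1.le.trans hy.2))
  have hbound := (hφ.hasFDerivAt_fderiv_and_norm_sub_le ha hs hsU hy hx).2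
  have hbound' := (hφ.hasFDerivAt_fderiv_and_norm_sub_le ha hs hsU hy hx').2
  have hlip := hφ.lipschitz _ hy x (hmemU x hx) x' (hmemU x' hx')
  have hpow : K * (c * ‖x - x'‖) ^ (a - 1) * ‖x - x'‖ = K / c * (c * ‖x - x'‖) ^ a := by
    rw [Real.rpow_sub_one hy.1.ne']
    field_simp
  rw [norm_sub_rev] at hbound
  calc ‖fderiv ℝ g x - fderiv ℝ g x'‖
      ≤ ‖fderiv ℝ g x - φ' (c * ‖x - x'‖) x‖ +
          ‖φ' (c * ‖x - x'‖) x - φ' (c * ‖x - x'‖) x'‖ +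
          ‖φ' (c * ‖x - x'‖) x' - fderiv ℝ g x'‖ := by
        simpa only [dist_eq_norm] using dist_triangle4 (fderiv ℝ g x) _ _ (fderiv ℝ g x')
    _ ≤ (14 * K / (1 - (1 / 2) ^ a) + K / c) * (c * ‖x - x'‖) ^ a :=
        (add_le_add_three hbound (hlip.trans_eq hpow) hbound').trans_eq (by ring)
    _ = _ := by rw [Real.mul_rpow hc.le hd.le, mul_assoc]

end IsScaleApprox

end ScaleApprox

section LocalExpansion

variable {n : ℕ} {a : ℝ} {u : En n × ℝ → ℝ} {f' : En n → En n →L[ℝ] ℝ} {x x' : En n}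
  {y r ρ R M M₁ M₂ : ℝ}

theorem mk_mem_ball_zero (hx : x ∈ Metric.ball 0 r) (hy : y ∈ Ico 0 r) :
    (x, y) ∈ Metric.ball (0 : En n × ℝ) r := by
  rw [mem_ball_zero_iff, Prod.norm_mk, Real.norm_of_nonneg hy.1]
  exact max_lt (mem_ball_zero_iff.1 hx) hy.2

namespace IsC11Extension

theorem exists_boundary_expansion (ha0 : 0 ≤ a) (ha1 : a < 1)
    (hu : IsC11Extension a u f' 0 R M₁ M₂) (hM : ∀ q ∈ closedHalfCyl 0 R, |u q| ≤ M)
    (hρ : 0 < ρ) (hρ1 : ρ ≤ 1) (hR : 2 * ρ + r ≤ R) :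
    ∃ g : En n → ℝ, ∀ x ∈ Metric.ball 0 r, ∀ y ∈ Ioo 0 r,
      |u (x, y) - u (x, 0) - y ^ (1 - a) * g x| ≤
        n * (n + 3) ^ 2 * (M + M₁ + M₂) / ρ ^ 2 * y ^ 2 := by
  have hexp (x : En n) (hx : x ∈ Metric.ball 0 r) : ∃ G, ∀ y ∈ Ioo 0 r,
      |u (x, y) - u (x, 0) - y ^ (1 - a) * G| ≤
        n * (n + 3) ^ 2 * (M + M₁ + M₂) / ρ ^ 2 * y ^ 2 := by
    have hmono {y : ℝ} (hy : y ∈ Ioo 0 r) : 2 * ρ + dist (x, y) 0 ≤ R :=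
      (add_le_add_right (mk_mem_ball_zero hx ⟨hy.1.le, hy.2⟩).le _).trans hR
    refine (hasBesselBound_slice (fun y hy ↦ (hu.mono (hmono hy)).harmonic _
      ⟨Metric.mem_ball_self (by positivity), hy.1⟩) fun y hy ↦
      (hu.mono (hmono hy)).abs_sum_D2_baseVec_le ha0 ha1.le hy.1 (fun q hq ↦ hM q
        ⟨Metric.closedBall_subset_closedBall' (hmono hy) hq.1, hq.2⟩) hρ hρ1)
      |>.exists_expansion_at_zero ha0 ha1 (hu.continuousOn.comp (by fun_prop) fun y hy ↦
        ⟨Metric.ball_subset_closedBall (Metric.ball_subset_ball (by linarith)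
          (mk_mem_ball_zero hx hy)), hy.1⟩)
  choose! g hg using hexp
  exact ⟨g, hg⟩

theorem norm_fderiv_comp_inl_sub_le (ha0 : 0 ≤ a) (ha1 : a ≤ 1)
    (hu : IsC11Extension a u f' 0 R M₁ M₂) (hM : ∀ q ∈ closedHalfCyl 0 R, |u q| ≤ M)
    (hρ : 0 < ρ) (hρ1 : ρ ≤ 1) (hR : 2 * ρ + r ≤ R) (hx : x ∈ Metric.ball 0 r)
    (hx' : x' ∈ Metric.ball 0 r) (hy : y ∈ Ioo 0 r) :
    ‖(fderiv ℝ u (x, y)).comp (.inl ℝ (En n) ℝ) - (fderiv ℝ u (x', y)).comp (.inl ℝ (En n) ℝ)‖ ≤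
      n * (n * ((n + 3) ^ 2 * (M + M₁ + M₂) / ρ ^ 2) * ‖x - x'‖) := by
  have hB (z : En n) (hz : z ∈ Metric.ball 0 r) (i j : Fin n) :
      |fderiv ℝ (fun q ↦ fderiv ℝ u q (baseVec j)) (z, y) (baseVec i)| ≤
        (n + 3) ^ 2 * (M + M₁ + M₂) / ρ ^ 2 := by
    have hmono : 2 * ρ + dist (z, y) 0 ≤ R :=
      (add_le_add_right (mk_mem_ball_zero hz ⟨hy.1.le, hy.2⟩).le _).trans hR
    exact (hu.mono hmono).abs_fderiv_fderiv_baseVec_le_div ha0 ha1 hy.1 (fun q hq ↦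
      hM q ⟨Metric.closedBall_subset_closedBall' hmono hq.1, hq.2⟩) hρ hρ1 i j
  have hdiff (z : En n) (hz : z ∈ Metric.ball 0 r) (j : Fin n) :
      DifferentiableAt ℝ (fun q ↦ fderiv ℝ u q (baseVec j)) (z, y) := by
    exact (hasFDerivAt_fderiv_apply (hu.harmonic _ ⟨Metric.ball_subset_ball (by linarith)
      (mk_mem_ball_zero hz ⟨hy.1.le, hy.2⟩), hy.1⟩).1 _).differentiableAt
  have hR0 : 0 ≤ R := by linarith [hy.1.trans hy.2]
  have hN : 0 ≤ M + M₁ + M₂ := hu.add_bounds_nonneg hR0 le_rfl hM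
  exact norm_le_of_norm_apply_single_le (by positivity) fun j ↦
    abs_slice_sub_le (convex_ball 0 r) (fun z hz ↦ hdiff z hz j) (by positivity)
      (fun z hz i ↦ hB z hz i j) hx hx'

theorem isScaleApprox (ha0 : 0 ≤ a) (ha1 : a < 1)
    (hu : IsC11Extension a u f' 0 R M₁ M₂) (hM : ∀ q ∈ closedHalfCyl 0 R, |u q| ≤ M)
    (hρ : 0 < ρ) (hρ1 : ρ ≤ 1) (hR : 2 * ρ + r ≤ R) {δ K : ℝ} (hδ : δ < r) {g : En n → ℝ}
    (hg : ∀ x ∈ Metric.ball 0 r, ∀ y ∈ Ioo 0 r,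
      |u (x, y) - u (x, 0) - y ^ (1 - a) * g x| ≤ K * y ^ 2)
    (hK : n * (n * ((n + 3) ^ 2 * (M + M₁ + M₂) / ρ ^ 2)) + M₂ ≤ K) :
    IsScaleApprox a K δ g (fun y x ↦ y ^ (a - 1) * (u (x, y) - u (x, 0)))
      (fun y x ↦ y ^ (a - 1) • ((fderiv ℝ u (x, y)).comp (.inl ℝ (En n) ℝ) - f' x))
      (Metric.ball 0 r) := by
  have hy {y : ℝ} (hy : y ∈ Ioc 0 δ) : y ∈ Ioo 0 r := ⟨hy.1, hy.2.trans_lt hδ⟩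
  have hsub {x : En n} (hx : x ∈ Metric.ball 0 r) : x ∈ Metric.closedBall 0 R :=
    Metric.ball_subset_closedBall (Metric.ball_subset_ball (by linarith) hx)
  refine ⟨fun y hyδ x hx ↦ ?_, fun y hyδ x hx ↦ ?_, fun y hyδ x hx x' hx' ↦ ?_⟩
  · have hC2 := (hu.harmonic (x, y) ⟨Metric.ball_subset_ball (by linarith)
      (mk_mem_ball_zero hx ⟨hyδ.1.le, (hy hyδ).2⟩), hyδ.1⟩).1
    exact ((hasFDerivAt_slice (hC2.differentiableAt two_ne_zero)).sub
      (hu.hasFDerivAt x (hsub hx))).const_mul _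
  · have hcancel : y ^ (a - 1) * y ^ (1 - a) = 1 := by
      rw [← Real.rpow_add hyδ.1, sub_add_sub_cancel, sub_self, Real.rpow_zero]
    have hpow : y ^ (a - 1) * y ^ 2 = y ^ (1 + a) := by
      rw [← Real.rpow_natCast, ← Real.rpow_add hyδ.1]
      congr 1
      push_cast
      ring
    have hfactor : g x - y ^ (a - 1) * (u (x, y) - u (x, 0)) =
        -(y ^ (a - 1) * (u (x, y) - u (x, 0) - y ^ (1 - a) * g x)) := by
      linear_combination (-g x) * hcancel
    rw [hfactor, norm_neg, norm_mul, Real.norm_of_nonneg (Real.rpow_nonneg hyδ.1.le _), ← hpow,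
      mul_left_comm]
    exact mul_le_mul_of_nonneg_left (hg x hx y (hy hyδ)) (Real.rpow_nonneg hyδ.1.le _)
  · rw [← smul_sub, norm_smul, Real.norm_of_nonneg (Real.rpow_nonneg hyδ.1.le _), mul_comm K,
      mul_assoc]
    refine mul_le_mul_of_nonneg_left ?_ (Real.rpow_nonneg hyδ.1.le _)
    rw [sub_sub_sub_comm]
    refine (norm_sub_le _ _).trans ((add_le_add (hu.norm_fderiv_comp_inl_sub_le ha0 ha1.le hM hρ
      hρ1 hR hx hx' (hy hyδ)) (hu.lipschitz x (hsub hx) x' (hsub hx'))).trans ?_)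
    rw [← mul_assoc, ← add_mul]
    exact mul_le_mul_of_nonneg_right hK (norm_nonneg _)

theorem exists_expansion (ha0 : 0 < a) (ha1 : a < 1)
    (hu : IsC11Extension a u f' 0 R M₁ M₂) (hM : ∀ q ∈ closedHalfCyl 0 R, |u q| ≤ M)
    (hρ : 0 < ρ) (hρ1 : ρ ≤ 1) (hr : 0 < r) (hR : 3 * ρ + r ≤ R) :
    ∃ (g : En n → ℝ) (K : ℝ), (∀ x ∈ Metric.ball 0 r, HasFDerivAt g (fderiv ℝ g x) x) ∧
      (∀ x ∈ Metric.ball 0 r, ∀ x' ∈ Metric.ball 0 r,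
        ‖fderiv ℝ g x - fderiv ℝ g x'‖ ≤ K * ‖x - x'‖ ^ a) ∧
      ∀ p ∈ halfCyl 0 r, |u p - u (p.1, 0) - p.2 ^ (1 - a) * g p.1| ≤
        n * (n + 3) ^ 2 * (M + M₁ + M₂) / ρ ^ 2 * p.2 ^ 2 := by
  obtain ⟨g, hg⟩ := hu.exists_boundary_expansion (r := r + ρ) ha0.le ha1 hM hρ hρ1 (by linarith)
  set Q : ℝ := n * (n + 3) ^ 2 * (M + M₁ + M₂) / ρ ^ 2
  set L : ℝ := n * (n * ((n + 3) ^ 2 * (M + M₁ + M₂) / ρ ^ 2)) + M₂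
  have happrox := hu.isScaleApprox ha0.le ha1 hM hρ hρ1 (by linarith) (δ := ρ) (K := max Q L)
    (lt_add_of_pos_left ρ hr) (fun x hx y hy ↦ (hg x hx y hy).trans
      (mul_le_mul_of_nonneg_right (le_max_left _ _) (sq_nonneg y))) (le_max_right _ _)
  have hball : ∀ x ∈ Metric.ball (0 : En n) r, Metric.closedBall x ρ ⊆ Metric.ball 0 (r + ρ) :=
    fun x hx ↦ Metric.closedBall_subset_ball' (by linarith [Metric.mem_ball.1 hx])
  refine ⟨g, (14 * max Q L / (1 - (1 / 2) ^ a) + max Q L / (ρ / (2 * r))) * (ρ / (2 * r)) ^ a,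
    fun x hx ↦ ?_, fun x hx x' hx' ↦ ?_, fun p hp ↦ ?_⟩
  · exact (happrox.hasFDerivAt_fderiv_and_norm_sub_le ha0 Metric.isOpen_ball hball
      (right_mem_Ioc.2 hρ) hx).1
  · refine happrox.norm_fderiv_sub_le (c := ρ / (2 * r)) ha0 Metric.isOpen_ball hball
      (by positivity) hx hx' ?_
    rw [div_mul_eq_mul_div, div_le_iff₀ (by positivity), ← dist_eq_norm]
    have := dist_triangle_right x x' 0
    gcongr
    linarith [Metric.mem_ball.1 hx, Metric.mem_ball.1 hx']
  · have hp₁ : dist p.1 0 < r := (le_max_left _ _).trans_lt hp.1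
    have hp₂ : dist p.2 0 < r := (le_max_right _ _).trans_lt hp.1
    rw [Real.dist_0_eq_abs] at hp₂
    exact hg p.1 (hp₁.trans (by linarith)) p.2 ⟨hp.2, by linarith [le_abs_self p.2]⟩

end IsC11Extension

namespace IsC11Extension

theorem exists_expansion_le_integral (n : ℕ) (ha0 : 0 < a) (ha1 : a < 1) :
    ∃ C > 0, ∀ (u : En n × ℝ → ℝ) (f' : En n → En n →L[ℝ] ℝ) (M₀ M₁ M₂ J : ℝ),
      IsC11Extension a u f' 0 (7 / 10) M₁ M₂ →
      (∀ x ∈ Metric.closedBall 0 (7 / 10), |u (x, 0)| ≤ M₀) →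
      IntegrableOn (fun p ↦ p.2 ^ a * u p ^ 2) (halfCyl 0 (7 / 10)) → 0 ≤ J →
      ∫ p in halfCyl 0 (7 / 10), p.2 ^ a * u p ^ 2 ≤ J ^ 2 →
      ∃ (g : En n → ℝ) (K : ℝ), (∀ x ∈ Metric.ball 0 (1 / 2), HasFDerivAt g (fderiv ℝ g x) x) ∧
        (∀ x ∈ Metric.ball 0 (1 / 2), ∀ x' ∈ Metric.ball 0 (1 / 2),
          ‖fderiv ℝ g x - fderiv ℝ g x'‖ ≤ K * ‖x - x'‖ ^ a) ∧
        ∀ p ∈ halfCyl 0 (1 / 2), |u p - u (p.1, 0) - p.2 ^ (1 - a) * g p.1| ≤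
          C * p.2 ^ 2 * (M₀ + M₁ + M₂ + J) := by
  obtain ⟨C, hC, hsup⟩ := exists_weighted_sup_bound n ha0.le ha1
  refine ⟨400 * (n + 3) ^ 3 * (20 ^ (n + 2) * C + 1), by positivity,
    fun u f' M₀ M₁ M₂ J hu hM₀ hI hJ0 hJ ↦ ?_⟩
  have hM₀0 : 0 ≤ M₀ := (abs_nonneg _).trans (hM₀ 0 (Metric.mem_closedBall_self (by norm_num)))
  have hM₁ : 0 ≤ M₁ := hu.norm_bound_nonneg (by norm_num)
  have hM₂ : 0 ≤ M₂ := hu.lipschitz_nonneg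
  have hM : ∀ q ∈ closedHalfCyl 0 (13 / 20),
      |u q| ≤ 20 ^ (n + 2) * (C * (M₀ + M₁ + M₂ + J)) := fun q hq ↦ by
    have hq' : ‖q‖ ≤ 13 / 20 := mem_closedBall_zero_iff.1 hq.1
    rw [← inv_mul_le_iff₀ (by positivity), ← inv_pow]
    refine le_trans ?_ (hsup u f' _ M₀ M₁ M₂ J (by norm_num) hu hM₀ hI hJ0 hJ q
      ⟨Metric.closedBall_subset_closedBall (by norm_num) hq.1, hq.2⟩)
    gcongr
    linarith
  obtain ⟨g, K, hg, hK, hexp⟩ := (hu.mono (X' := 0) (ρ' := 13 / 20)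
    (by rw [dist_self]; norm_num)).exists_expansion (ρ := 1 / 20) (r := 1 / 2) ha0 ha1 hM
    (by norm_num) (by norm_num) (by norm_num) (by norm_num)
  refine ⟨g, K, hg, hK, fun p hp ↦ (hexp p hp).trans ?_⟩
  set S : ℝ := M₀ + M₁ + M₂ + J
  have hS : M₁ + M₂ ≤ S := by linarith
  calc n * (n + 3) ^ 2 * (20 ^ (n + 2) * (C * S) + M₁ + M₂) / (1 / 20) ^ 2 * p.2 ^ 2
      ≤ (n + 3) * (n + 3) ^ 2 * (20 ^ (n + 2) * (C * S) + S) / (1 / 20) ^ 2 * p.2 ^ 2 := by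
        rw [add_assoc _ M₁]
        gcongr
        linarith
    _ = 400 * (n + 3) ^ 3 * (20 ^ (n + 2) * C + 1) * p.2 ^ 2 * S := by ring

end IsC11Extension

theorem isOpen_flatBall : IsOpen (flatBall n r) := isOpen_lt continuous_norm continuous_const

theorem isOpen_halfBall : IsOpen (halfBall n r) := by
  have hball : IsOpen {p : En n × ℝ | ‖p.1‖ ^ 2 + p.2 ^ 2 < r ^ 2} :=
    isOpen_lt (by fun_prop) continuous_const
  exact hball.inter (isOpen_lt continuous_const continuous_snd)

theorem halfBall_subset_halfCyl (hr : 0 ≤ r) : halfBall n r ⊆ halfCyl 0 r := fun p hp ↦ by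
  refine ⟨?_, hp.2⟩
  rw [mem_ball_zero_iff, Prod.norm_def, Real.norm_eq_abs]
  exact max_lt (lt_of_pow_lt_pow_left₀ 2 hr (by linarith [hp.1, sq_nonneg p.2]))
    (abs_lt_of_sq_lt_sq (by linarith [hp.1, sq_nonneg ‖p.1‖]) hr)

theorem closedHalfCyl_subset_halfBallWithBase (hρ : 2 * ρ ^ 2 < 1) :
    closedHalfCyl 0 ρ ⊆ halfBallWithBase n 1 := fun p hp ↦ by
  have hnorm : ‖p‖ ≤ ρ := mem_closedBall_zero_iff.1 hp.1
  refine ⟨?_, hp.2⟩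
  rw [← sq_abs p.2, ← Real.norm_eq_abs]
  linarith [pow_le_pow_left₀ (norm_nonneg _) ((norm_fst_le p).trans hnorm) 2,
    pow_le_pow_left₀ (norm_nonneg _) ((norm_snd_le p).trans hnorm) 2]

theorem halfCyl_subset_halfBall (hρ : 2 * ρ ^ 2 < 1) : halfCyl 0 ρ ⊆ halfBall n 1 := fun _ hp ↦
  ⟨(closedHalfCyl_subset_halfBallWithBase hρ (halfCyl_subset_closedHalfCyl hp)).1, hp.2⟩

theorem lipschitz_const_nonneg (hn : 1 ≤ n) (hr : 0 < r)
    (hf : ∀ x ∈ flatBall n r, ∀ x' ∈ flatBall n r, ‖f' x - f' x'‖ ≤ M₂ * ‖x - x'‖) : 0 ≤ M₂ := by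
  have : Nonempty (Fin n) := ⟨⟨0, hn⟩⟩
  obtain ⟨x, hx⟩ := exists_norm_eq (En n) (half_pos hr).le
  have h := hf x (hx.trans_lt (half_lt_self hr)) 0 (norm_zero.trans_lt hr)
  rw [sub_zero x, hx] at h
  exact nonneg_of_mul_nonneg_left ((norm_nonneg _).trans h) (half_pos hr)

theorem isC11Extension_of_halfBall (hn : 1 ≤ n) (hu : ContinuousOn u (halfBallWithBase n 1))
    (hharm : IsAHarmonicOn a u (halfBall n 1))
    (hf : ∀ x ∈ flatBall n 1, HasFDerivWithinAt (fun z ↦ u (z, 0)) (f' x) (flatBall n 1) x)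
    (hM₁ : ∀ x ∈ flatBall n 1, ‖f' x‖ ≤ M₁)
    (hM₂ : ∀ x ∈ flatBall n 1, ∀ x' ∈ flatBall n 1, ‖f' x - f' x'‖ ≤ M₂ * ‖x - x'‖)
    (hρ : 2 * ρ ^ 2 < 1) : IsC11Extension a u f' 0 ρ M₁ M₂ := by
  have hflat : Metric.closedBall 0 ρ ⊆ flatBall n 1 := fun x hx ↦
    (mem_closedBall_zero_iff.1 hx).trans_lt (by nlinarith)
  exact
    { continuousOn := hu.mono (closedHalfCyl_subset_halfBallWithBase hρ)
      harmonic := fun p hp ↦ hharm.isAHarmonicAt isOpen_halfBall (halfCyl_subset_halfBall hρ hp)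
      hasFDerivAt := fun x hx ↦
        (hf x (hflat hx)).hasFDerivAt (isOpen_flatBall.mem_nhds (hflat hx))
      norm_le := fun x hx ↦ hM₁ x (hflat hx)
      lipschitz := fun x hx x' hx' ↦ hM₂ x (hflat hx) x' (hflat hx')
      lipschitz_nonneg := lipschitz_const_nonneg hn one_pos hM₂ }

end LocalExpansion

/-- **Lemma 2.2 (local expansion).** If `u` is `a`-harmonic in `B_1^+`, lies in
`L²(B_1^+, y^a)`, and its trace `f(x) = u(x,0)` is `C^{1,1}` on `B_1^0`, then
`u(x,y) = f(x) + y^{1-a} g(x) + O(y²)` in `B_{1/2}^+`, where `g` has an `a`-Hölder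
continuous derivative (here `a = 1-2s`, `1-a = 2s`). -/
theorem local_expansion_of_extension (n : ℕ) (hn : 1 ≤ n) (s : ℝ)
    (hs : s ∈ Ioo (0 : ℝ) (1/2)) :
    ∃ C > 0, ∀ (u : En n × ℝ → ℝ) (f' : En n → (En n →L[ℝ] ℝ)) (M0 M1 M2 J : ℝ),
      ContinuousOn u (halfBallWithBase n 1) →
      IsAHarmonicOn (1 - 2*s) u (halfBall n 1) →
      IntegrableOn (fun p : En n × ℝ => p.2 ^ (1 - 2*s) * (u p)^2) (halfBall n 1) volume →
      (∀ x ∈ flatBall n 1, HasFDerivWithinAt (fun z => u (z, 0)) (f' x) (flatBall n 1) x) →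
      (∀ x ∈ flatBall n 1, |u (x, 0)| ≤ M0) →
      (∀ x ∈ flatBall n 1, ‖f' x‖ ≤ M1) →
      (∀ x ∈ flatBall n 1, ∀ x' ∈ flatBall n 1, ‖f' x - f' x'‖ ≤ M2 * ‖x - x'‖) →
      0 ≤ J →
      (∫ p in halfBall n 1, p.2 ^ (1 - 2*s) * (u p)^2) ≤ J^2 →
      ∃ (g : En n → ℝ) (g' : En n → (En n →L[ℝ] ℝ)) (K : ℝ),
        (∀ x ∈ flatBall n (1/2), HasFDerivWithinAt g (g' x) (flatBall n (1/2)) x) ∧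
        (∀ x ∈ flatBall n (1/2), ∀ x' ∈ flatBall n (1/2),
          ‖g' x - g' x'‖ ≤ K * ‖x - x'‖ ^ (1 - 2*s)) ∧
        ∀ p ∈ halfBall n (1/2),
          |u p - u (p.1, 0) - p.2 ^ (2*s) * g p.1| ≤ C * p.2^2 * (M0 + M1 + M2 + J) := by
  obtain ⟨hs0, hs1⟩ := hs
  obtain ⟨C, hC, hexp⟩ := IsC11Extension.exists_expansion_le_integral (a := 1 - 2 * s) n
    (by linarith) (by linarith)
  refine ⟨C, hC, fun u f' M0 M1 M2 J hcont hharm hI hf h0 h1 h2 hJ0 hJ ↦ ?_⟩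
  have hu := isC11Extension_of_halfBall (ρ := 7 / 10) hn hcont hharm hf h1 h2 (by norm_num)
  have hsub : halfCyl 0 (7 / 10) ⊆ halfBall n 1 := halfCyl_subset_halfBall (by norm_num)
  have htrace : ∀ x ∈ Metric.closedBall 0 (7 / 10), |u (x, 0)| ≤ M0 := fun x hx ↦
    h0 x ((mem_closedBall_zero_iff.1 hx).trans_lt (by norm_num))
  have hmass := setIntegral_weighted_sq_mono isOpen_halfBall.measurableSet (fun p hp ↦ hp.2) hI hsub
  obtain ⟨g, K, hg, hK, hbound⟩ :=
    hexp u f' M0 M1 M2 J hu htrace (hI.mono_set hsub) hJ0 (hmass.trans hJ)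
  rw [sub_sub_cancel] at hbound
  have hball {x : En n} (hx : x ∈ flatBall n (1 / 2)) : x ∈ Metric.ball 0 (1 / 2) :=
    mem_ball_zero_iff.2 hx
  exact ⟨g, fderiv ℝ g, K, fun x hx ↦ (hg x (hball hx)).hasFDerivWithinAt,
    fun x hx x' hx' ↦ hK x (hball hx) x' (hball hx'),
    fun p hp ↦ hbound p (halfBall_subset_halfCyl (by norm_num) hp)⟩

end
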